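/- arXiv:1203.4161 — 3 statements merged into one kernel-verified Lean document; each statement's English description precedes it below -/
import Mathlib

section
/- Let g ≥ 1 and set n = 2g. Then for every r ≥ 1, the quotient γ_r L_g / γ_{r+1} L_g of consecutive terms of the lower central series of L_g is a finite-dimensional ℚ-vector space, and its dimension ε_r is given by ε_r = ∑_{ℓ | r} (μ(ℓ)/ℓ) · ∑_{p+2q = r/ℓ, p+q ≥ 1} (−1)^q · n^p · C(p+q, p)/(p+q), where the inner sum ranges over pairs of nonnegative integers (p,q) with p + 2q = r/ℓ. -/
/-- The element `ω = ∑_{i=1}^g ⁅x_i, x_{g+i}⁆` of the free Lie algebra `FreeLieAlgebra ℚ (Fin 2g)`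
on generators `x_1, …, x_{2g}`. -/
noncomputable def sympRelation (g : ℕ) : FreeLieAlgebra ℚ (Fin (2 * g)) :=
  ∑ i : Fin g,
    ⁅FreeLieAlgebra.of ℚ (⟨i.1, by have := i.2; omega⟩ : Fin (2 * g)),
      FreeLieAlgebra.of ℚ (⟨g + i.1, by have := i.2; omega⟩ : Fin (2 * g))⁆

/-- The Lie ideal of `FreeLieAlgebra ℚ (Fin 2g)` generated by `ω`. -/
noncomputable def sympIdeal (g : ℕ) : LieIdeal ℚ (FreeLieAlgebra ℚ (Fin (2 * g))) :=
  LieSubmodule.lieSpan ℚ (FreeLieAlgebra ℚ (Fin (2 * g))) {sympRelation g}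

/-- `L_g`, the quotient of the free Lie algebra `FreeLieAlgebra ℚ (Fin 2g)` by the Lie ideal
generated by `ω = ∑_{i=1}^g ⁅x_i, x_{g+i}⁆`. -/
abbrev SympLieAlgebra (g : ℕ) : Type :=
  FreeLieAlgebra ℚ (Fin (2 * g)) ⧸ sympIdeal g

/-- The quotient `γ_r L / γ_{r+1} L` of consecutive terms of the lower central series of a
Lie algebra `L` over `ℚ`, where `γ_1 L = L` and `γ_{r+1} L = ⁅L, γ_r L⁆`
(so `γ_r L = LieModule.lowerCentralSeries ℚ L L (r-1)`), realized as a quotient module. -/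
abbrev lcsQuotient (L : Type*) [LieRing L] [LieAlgebra ℚ L] (r : ℕ) : Type _ :=
  ↥(LieModule.lowerCentralSeries ℚ L L (r - 1)).toSubmodule ⧸
    Submodule.comap (LieModule.lowerCentralSeries ℚ L L (r - 1)).toSubmodule.subtype
      (LieModule.lowerCentralSeries ℚ L L r).toSubmodule

/-!
Lazard elimination of a generator `a` exhibits the free Lie algebra on `Y` as the semidirect product
of the line spanned by `a` with the free Lie algebra on the elements `(ad a)^k y`, `y ≠ a`. The same
works modulo one relation `⁅a, b⁆ + ρ` in which `ρ` does not involve `a` and `b`: the relation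
expresses `(ad a)^k b` for `k ≥ 1` through the other elements, so that the kernel is still free, on
`b` and the `(ad a)^k y` with `y ≠ a, b`.

Grade by giving the generators positive weights, and let `d m` be the dimension of the weight `m`
part. Eliminating `a` divides both `∏ (1 - X ^ m) ^ d m` and `1 - ∑ X ^ w y` by `1 - X ^ w a`. As
successive eliminations push all weights to infinity, the two agree for every free Lie algebra. For
`n` generators of weight one and a quadratic relation, one further elimination then gives
`∏ (1 - X ^ m) ^ d m = 1 - n * X + X ^ 2`. Logarithmic derivatives and Möbius inversion turn this
into a formula for `d r`, and the lower central series is the filtration by weight.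
-/

namespace OneRelatorLie

open PowerSeries

attribute [local instance] LieRing.ofAssociativeRing LieAlgebra.ofAssociativeAlgebra

/-! ### Free Lie algebras and semidirect products with a line -/

section FreeLieAlgebra

variable {R : Type*} [CommRing R] {Y : Type*}

theorem lieSpan_range_freeLieAlgebra_of_eq_top :
    LieSubalgebra.lieSpan R (FreeLieAlgebra R Y) (Set.range (FreeLieAlgebra.of R)) = ⊤ := by
  let K := LieSubalgebra.lieSpan R (FreeLieAlgebra R Y) (Set.range (FreeLieAlgebra.of R))
  let f : FreeLieAlgebra R Y →ₗ⁅R⁆ K :=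
    FreeLieAlgebra.lift R fun y ↦ ⟨.of R y, LieSubalgebra.subset_lieSpan ⟨y, rfl⟩⟩
  have hf : K.incl.comp f = LieHom.id := FreeLieAlgebra.hom_ext fun y ↦ by simp [f]
  refine eq_top_iff.2 fun u _ ↦ ?_
  rw [← LieHom.id_apply (R := R) u, ← hf]
  exact (f u).2

@[elab_as_elim]
theorem freeLieAlgebra_induction {p : FreeLieAlgebra R Y → Prop} (u : FreeLieAlgebra R Y)
    (of : ∀ y, p (.of R y)) (zero : p 0) (smul : ∀ (t : R) u, p u → p (t • u))
    (add : ∀ u v, p u → p v → p (u + v)) (lie : ∀ u v, p u → p v → p ⁅u, v⁆) : p u := by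
  have hu : u ∈ LieSubalgebra.lieSpan R (FreeLieAlgebra R Y) (Set.range (FreeLieAlgebra.of R)) :=
    lieSpan_range_freeLieAlgebra_of_eq_top (R := R) (Y := Y) ▸ LieSubalgebra.mem_top u
  induction hu using LieSubalgebra.lieSpan_induction with
  | mem x hx => obtain ⟨y, rfl⟩ := hx; exact of y
  | zero => exact zero
  | smul t x _ hx => exact smul t x hx
  | add x y _ _ hx hy => exact add x y hx hy
  | lie x y _ _ hx hy => exact lie x y hx hy

variable {M : Type*} [AddCommGroup M] [Module R M] [LieRingModule (FreeLieAlgebra R Y) M]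
  [LieModule R (FreeLieAlgebra R Y) M]

open LieModule.Cohomology LieAlgebra in
/-- The homomorphism `u ↦ (u, D u)` from the free Lie algebra to its square-zero extension by `M`,
where `D` is the derivation with `D y = f y` on generators. -/
noncomputable def freeGraph (f : Y → M) :
    FreeLieAlgebra R Y →ₗ⁅R⁆ ofTwoCocycle (0 : twoCocycle R (FreeLieAlgebra R Y) M) :=
  FreeLieAlgebra.lift R fun y ↦ ofProd _ (.of R y, f y)

open LieAlgebra in
theorem fst_freeGraph (f : Y → M) (u : FreeLieAlgebra R Y) :
    ((ofProd _).symm (freeGraph f u)).1 = u := by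
  induction u using freeLieAlgebra_induction with
  | of y => simp [freeGraph]
  | zero => simp
  | smul t u hu => simp [hu]
  | add u v hu hv => simp [hu, hv]
  | lie u v hu hv => simp [bracket_ofTwoCocycle, hu, hv]

open LieAlgebra in
/-- The derivation of the free Lie algebra with prescribed values on the generators. -/
noncomputable def freeDerivation (f : Y → M) : LieDerivation R (FreeLieAlgebra R Y) M where
  toFun u := ((ofProd _).symm (freeGraph f u)).2
  map_add' := by simp
  map_smul' := by simp
  leibniz' u v := by simp [bracket_ofTwoCocycle, fst_freeGraph]

@[simp]
theorem freeDerivation_of (f : Y → M) (y : Y) : freeDerivation f (.of R y) = f y := by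
  change ((LieAlgebra.ofProd _).symm (freeGraph f _)).2 = _
  simp [freeGraph]

end FreeLieAlgebra

section Semidirect

variable {R : Type*} [CommRing R] {L : Type*} [LieRing L] [LieAlgebra R L]

/-- The action of the one-dimensional Lie algebra `R` by multiples of the derivation `D`. -/
def smulDerivation (D : LieDerivation R L L) : R →ₗ⁅R⁆ LieDerivation R L L where
  __ := LinearMap.toSpanSingleton R (LieDerivation R L L) D
  map_lie' := by simp [LieRing.of_associative_ring_bracket, mul_comm]

@[simp]
theorem smulDerivation_apply (D : LieDerivation R L L) (t : R) : smulDerivation D t = t • D := rfl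

/-- The semidirect product `L ⋊ R`, in which `1 : R` acts on `L` as the derivation `D`. -/
abbrev SemidirectLine (D : LieDerivation R L L) := LieAlgebra.SemiDirectSum L R (smulDerivation D)

variable {D : LieDerivation R L L} {A : Type*} [LieRing A] [LieAlgebra R A]

/-- The homomorphism out of `L ⋊ R` which is `h` on `L` and maps `1 : R` to `a`. -/
def semidirectDesc (a : A) (h : L →ₗ⁅R⁆ A) (hD : ∀ u, h (D u) = ⁅a, h u⁆) :
    SemidirectLine D →ₗ⁅R⁆ A where
  toFun x := x.right • a + h x.left
  map_add' x y := by simp only [LieAlgebra.SemiDirectSum.add_eq_mk, map_add]; module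
  map_smul' t x := by simp [mul_smul]
  map_lie' {x y} := by
    have hskew : ⁅h x.left, a⁆ = -⁅a, h x.left⁆ := (lie_skew _ _).symm
    simp only [LieAlgebra.SemiDirectSum.lie_eq_mk, LieRing.of_associative_ring_bracket,
      mul_comm y.right, sub_self, smulDerivation_apply, LieDerivation.smul_apply, map_add, map_sub,
      map_smul, hD, LieHom.map_lie, lie_add, add_lie, smul_lie, lie_smul, lie_self, hskew]
    module

theorem semidirectDesc_bijective {a : A} {h : L →ₗ⁅R⁆ A} (hD : ∀ u, h (D u) = ⁅a, h u⁆)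
    (hspan : LieSubalgebra.lieSpan R A (insert a (Set.range h)) = ⊤)
    (f : A →ₗ⁅R⁆ SemidirectLine D) (hfa : f a = ⟨0, 1⟩) (hfh : ∀ u, f (h u) = ⟨u, 0⟩) :
    Function.Bijective (semidirectDesc a h hD) := by
  have hleft (x) : f (semidirectDesc a h hD x) = x := by
    simp [semidirectDesc, hfa, hfh]
  refine ⟨Function.LeftInverse.injective hleft, ?_⟩
  rw [← LieHom.range_eq_top, eq_top_iff, ← hspan, LieSubalgebra.lieSpan_le, Set.insert_subset_iff]
  refine ⟨⟨⟨0, 1⟩, by simp [semidirectDesc]⟩, ?_⟩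
  rintro _ ⟨u, rfl⟩
  exact ⟨⟨u, 0⟩, by simp [semidirectDesc]⟩

theorem apply_ad_pow_eq_left {f : A →ₗ⁅R⁆ SemidirectLine D} {a x : A} {u : L}
    (ha : f a = ⟨0, 1⟩) (hx : f x = ⟨u, 0⟩) (k : ℕ) :
    f ((LieAlgebra.ad R A a ^ k) x) = ⟨((D : Module.End R L) ^ k) u, 0⟩ := by
  induction k with
  | zero => simpa using hx
  | succ k ih => simp [pow_succ', ih, ha]

end Semidirect

/-! ### The grading by a derivation and the lower central series -/

section Weight

variable {R : Type*} [CommRing R] {L : Type*} [LieRing L] [LieAlgebra R L]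

/-- The space of elements of weight `m` for the grading of `L` determined by the derivation `E`. -/
def weightSpace (E : LieDerivation R L L) (m : ℕ) : Submodule R L :=
  Module.End.eigenspace (E : Module.End R L) (m : R)

variable {E : LieDerivation R L L}

theorem mem_weightSpace {m : ℕ} {u : L} : u ∈ weightSpace E m ↔ E u = (m : R) • u :=
  Module.End.mem_eigenspace_iff

theorem lie_mem_weightSpace {m k : ℕ} {u v : L} (hu : u ∈ weightSpace E m)
    (hv : v ∈ weightSpace E k) : ⁅u, v⁆ ∈ weightSpace E (m + k) := by
  rw [mem_weightSpace] at *
  rw [LieDerivation.apply_lie_eq_add, hu, hv, lie_smul, smul_lie]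
  push_cast
  module

/-- The span of the elements of weight at least `s`. -/
def weightGE (E : LieDerivation R L L) (s : ℕ) : Submodule R L := ⨆ k, weightSpace E (s + k)

theorem weightGE_le_iff {s : ℕ} {P : Submodule R L} :
    weightGE E s ≤ P ↔ ∀ m ≥ s, weightSpace E m ≤ P := by
  refine iSup_le_iff.trans ⟨fun h m hm ↦ ?_, fun h k ↦ h _ (Nat.le_add_right s k)⟩
  simpa [Nat.add_sub_cancel' hm] using h (m - s)

theorem weightSpace_le_weightGE {s m : ℕ} (h : s ≤ m) : weightSpace E m ≤ weightGE E s :=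
  weightGE_le_iff.1 le_rfl m h

theorem weightSpace_sup_weightGE_succ (E : LieDerivation R L L) (s : ℕ) :
    weightSpace E s ⊔ weightGE E (s + 1) = weightGE E s := by
  simpa [weightGE, add_assoc, add_comm, add_left_comm] using
    sup_iSup_nat_succ fun k ↦ weightSpace E (s + k)

theorem lie_mem_of_forall_mem_iSup {ι κ : Sort*} {V : ι → Submodule R L} {W : κ → Submodule R L}
    {U : Submodule R L} (h : ∀ i j, ∀ u ∈ V i, ∀ v ∈ W j, ⁅u, v⁆ ∈ U) {u v : L}
    (hu : u ∈ ⨆ i, V i) (hv : v ∈ ⨆ j, W j) : ⁅u, v⁆ ∈ U := by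
  let B : L →ₗ[R] L →ₗ[R] L := LieModule.toEnd R L L
  have hB (i) (x) (hx : x ∈ V i) : ⨆ j, W j ≤ U.comap (B x) :=
    iSup_le fun j y hy ↦ h i j x hx y hy
  have : ⨆ i, V i ≤ U.comap (B.flip v) := iSup_le fun i x hx ↦ hB i x hx hv
  exact this hu

theorem lie_mem_weightGE {s t : ℕ} {u v : L} (hu : u ∈ weightGE E s) (hv : v ∈ weightGE E t) :
    ⁅u, v⁆ ∈ weightGE E (s + t) :=
  lie_mem_of_forall_mem_iSup (fun i j _ hx _ hy ↦
    weightSpace_le_weightGE (by omega) (lie_mem_weightSpace hx hy)) hu hv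

theorem weightGE_antitone (E : LieDerivation R L L) : Antitone (weightGE E) := fun _ _ h ↦
  weightGE_le_iff.2 fun _ hm ↦ weightSpace_le_weightGE (h.trans hm)

theorem weightGE_eq_top {X : Set L} (hspan : LieSubalgebra.lieSpan R L X = ⊤) {s : ℕ}
    (hX : X ⊆ weightGE E s) : weightGE E s = ⊤ := by
  let N : LieSubalgebra R L :=
    { weightGE E s with
      lie_mem' := fun hu hv ↦ weightGE_antitone E (Nat.le_add_right s s) (lie_mem_weightGE hu hv) }
  have : (⊤ : LieSubalgebra R L) ≤ N := hspan ▸ LieSubalgebra.lieSpan_le.2 hX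
  exact eq_top_iff.2 this

variable [IsDomain R] [CharZero R] [Module.IsTorsionFree R L]

theorem iSupIndep_weightSpace (E : LieDerivation R L L) :
    iSupIndep (weightSpace E) :=
  (Module.End.eigenspaces_iSupIndep (E : Module.End R L)).comp Nat.cast_injective

theorem disjoint_weightSpace_weightGE (E : LieDerivation R L L) {m s : ℕ}
    (h : m < s) : Disjoint (weightSpace E m) (weightGE E s) :=
  (iSupIndep_weightSpace E m).mono_right <| weightGE_le_iff.2 fun k hk ↦
    le_iSup₂_of_le k (by omega) le_rfl

theorem weightSpace_eq_bot_of_lt {m s : ℕ} (h : m < s) (hs : weightGE E s = ⊤) :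
    weightSpace E m = ⊥ :=
  disjoint_top.1 (hs ▸ disjoint_weightSpace_weightGE E h)

end Weight

section LowerCentralSeries

variable {R : Type*} [CommRing R] {L : Type*} [LieRing L] [LieAlgebra R L]

theorem eq_top_of_lie_mem {X : Set L} (hspan : LieSubalgebra.lieSpan R L X = ⊤)
    {P : Submodule R L} (hXP : X ⊆ P) (hP : ∀ x ∈ X, ∀ v ∈ P, ⁅x, v⁆ ∈ P) : P = ⊤ := by
  have hmem (u : L) : u ∈ LieSubalgebra.lieSpan R L X := hspan ▸ LieSubalgebra.mem_top u
  have hideal (u : L) : ∀ v ∈ P, ⁅u, v⁆ ∈ P := by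
    induction hmem u using LieSubalgebra.lieSpan_induction with
    | mem x hx => exact hP x hx
    | zero => simp
    | smul t x _ hx => exact fun v hv ↦ smul_lie t x v ▸ P.smul_mem t (hx v hv)
    | add x y _ _ hx hy => exact fun v hv ↦ add_lie x y v ▸ P.add_mem (hx v hv) (hy v hv)
    | lie x y _ _ hx hy =>
      intro v hv
      rw [lie_lie]
      exact P.sub_mem (hx _ (hy v hv)) (hy _ (hx v hv))
  let N : LieSubalgebra R L := { P with lie_mem' := fun _ hv ↦ hideal _ _ hv }
  have : (⊤ : LieSubalgebra R L) ≤ N := hspan ▸ LieSubalgebra.lieSpan_le.2 hXP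
  exact eq_top_iff.2 this

theorem eq_of_le_of_iSupIndep_of_iSup_eq_top {α ι : Type*} [CompleteLattice α] [IsModularLattice α]
    {V W : ι → α} (hW : iSupIndep W) (hle : V ≤ W) (hV : ⨆ i, V i = ⊤) : V = W := by
  refine le_antisymm hle fun i ↦ ?_
  have hsup : V i ⊔ ⨆ (j) (_ : j ≠ i), W j = ⊤ := by
    refine eq_top_iff.2 (hV ▸ iSup_le fun j ↦ ?_)
    obtain rfl | hj := eq_or_ne j i
    · exact le_sup_left
    · exact le_sup_of_le_right (le_iSup₂_of_le j hj (hle j))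
  calc W i = (V i ⊔ ⨆ (j) (_ : j ≠ i), W j) ⊓ W i := by rw [hsup, top_inf_eq]
    _ = V i ⊔ (⨆ (j) (_ : j ≠ i), W j) ⊓ W i := sup_inf_assoc_of_le _ (hle i)
    _ = V i := by rw [inf_comm, (hW i).eq_bot, sup_bot_eq]
    _ ≤ V i := le_rfl

/-- The quotient of an internal direct sum `P = W ⊔ Q` by `Q`. -/
noncomputable def quotientEquivOfEqSup {M : Type*} [AddCommGroup M] [Module R M]
    {P W Q : Submodule R M} (hP : W ⊔ Q = P) (hd : Disjoint W Q) :
    (P ⧸ Q.comap P.subtype) ≃ₗ[R] W := by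
  subst hP
  exact (LinearMap.quotientInfEquivSupQuotient W Q).symm ≪≫ₗ
    Submodule.quotEquivOfEqBot _ (by simpa using Submodule.disjoint_iff_comap_eq_bot.1 hd)

/-- The quotient `γ_{r+1} L / γ_{r+2} L` of successive terms of the lower central series, where
`γ_1 L = L` is `LieModule.lowerCentralSeries R L L 0`. -/
abbrev LowerCentralQuotient (R L : Type*) [CommRing R] [LieRing L] [LieAlgebra R L] (r : ℕ) :=
  (LieModule.lowerCentralSeries R L L r).toSubmodule ⧸
    (LieModule.lowerCentralSeries R L L (r + 1)).toSubmodule.comap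
      (LieModule.lowerCentralSeries R L L r).toSubmodule.subtype

variable [IsDomain R] [CharZero R] [Module.IsTorsionFree R L]
  {E : LieDerivation R L L} {X : Set L}

theorem weightSpace_succ_le_lowerCentralSeries
    (hspan : LieSubalgebra.lieSpan R L X = ⊤) (hX : ∀ x ∈ X, E x = x) (m : ℕ) :
    weightSpace E (m + 1) ≤ (LieModule.lowerCentralSeries R L L m).toSubmodule := by
  have hX1 (x) (hx : x ∈ X) : x ∈ weightSpace E 1 := mem_weightSpace.2 (by simp [hX x hx])
  let V (m : ℕ) : Submodule R L :=
    weightSpace E (m + 1) ⊓ (LieModule.lowerCentralSeries R L L m).toSubmodule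
  have hV : ⨆ m, V m = ⊤ := by
    refine eq_top_of_lie_mem hspan (fun x hx ↦ ?_) fun x hx v hv ↦ ?_
    · exact Submodule.mem_iSup_of_mem 0 ⟨hX1 x hx, by simp⟩
    · refine (iSup_le fun k y hy ↦ ?_ : ⨆ m, V m ≤ (⨆ m, V m).comap (LieModule.toEnd R L L x)) hv
      refine Submodule.mem_iSup_of_mem (k + 1) ⟨?_, ?_⟩
      · rw [add_comm _ 1]
        exact lie_mem_weightSpace (hX1 x hx) hy.1
      · exact LieModule.lowerCentralSeries_succ R L L k ▸
          LieSubmodule.lie_mem_lie (LieSubmodule.mem_top x) hy.2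
  have := eq_of_le_of_iSupIndep_of_iSup_eq_top
    ((iSupIndep_weightSpace E).comp Nat.succ_injective) (fun _ ↦ inf_le_left) hV
  exact inf_eq_left.1 (congrFun this m)

theorem lowerCentralSeries_eq_weightGE (hspan : LieSubalgebra.lieSpan R L X = ⊤)
    (hX : ∀ x ∈ X, E x = x) (r : ℕ) :
    (LieModule.lowerCentralSeries R L L r).toSubmodule = weightGE E (r + 1) := by
  have htop : weightGE E 1 = ⊤ := weightGE_eq_top hspan fun x hx ↦
    weightSpace_le_weightGE le_rfl (mem_weightSpace.2 (by simp [hX x hx]))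
  refine le_antisymm ?_ (weightGE_le_iff.2 fun m hm ↦ ?_)
  · induction r with
    | zero => simp [htop]
    | succ r ih =>
      rw [LieModule.lowerCentralSeries_succ, LieSubmodule.lieIdeal_oper_eq_linear_span',
        Submodule.span_le]
      rintro _ ⟨x, -, y, hy, rfl⟩
      rw [add_comm _ 1]
      exact lie_mem_weightGE (htop ▸ Submodule.mem_top) (ih hy)
  · obtain ⟨k, rfl⟩ : ∃ k, m = k + 1 := ⟨m - 1, by omega⟩
    exact (weightSpace_succ_le_lowerCentralSeries hspan hX k).trans
      (LieModule.antitone_lowerCentralSeries R L L (by omega))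

/-- The lower central series of a Lie algebra generated in weight one is the filtration by weight,
so its successive quotients are the weight spaces. -/
noncomputable def lowerCentralQuotientEquiv
    (hspan : LieSubalgebra.lieSpan R L X = ⊤) (hX : ∀ x ∈ X, E x = x) (r : ℕ) :
    LowerCentralQuotient R L r ≃ₗ[R] weightSpace E (r + 1) :=
  quotientEquivOfEqSup
    (by simp only [lowerCentralSeries_eq_weightGE hspan hX, weightSpace_sup_weightGE_succ])
    (by
      rw [lowerCentralSeries_eq_weightGE hspan hX]
      exact disjoint_weightSpace_weightGE E (Nat.lt_succ_self _))

end LowerCentralSeries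

/-! ### Lazard elimination -/

section Euler

variable {R : Type*} [CommRing R] {Y : Type*} (w : Y → ℕ)

variable (R) in
/-- The derivation of the free Lie algebra which multiplies each generator `y` by `w y`; its weight
spaces are the graded pieces when `y` is put in degree `w y`. -/
noncomputable def eulerDerivation :
    LieDerivation R (FreeLieAlgebra R Y) (FreeLieAlgebra R Y) :=
  freeDerivation fun y ↦ (w y : R) • .of R y

theorem eulerDerivation_of (y : Y) :
    eulerDerivation R w (.of R y) = (w y : R) • .of R y :=
  freeDerivation_of _ y

theorem weightGE_eulerDerivation_eq_top {s : ℕ} (hs : ∀ y, s ≤ w y) :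
    weightGE (eulerDerivation R w) s = ⊤ :=
  weightGE_eq_top lieSpan_range_freeLieAlgebra_of_eq_top <| Set.range_subset_iff.2 fun y ↦
    weightSpace_le_weightGE (hs y) (mem_weightSpace.2 (eulerDerivation_of w y))

theorem apply_lift_eq_lift_eulerDerivation {A : Type*} [LieRing A] [LieAlgebra R A]
    {E : LieDerivation R A A} {f : Y → A} (hf : ∀ y, E (f y) = (w y : R) • f y)
    (u : FreeLieAlgebra R Y) :
    E (FreeLieAlgebra.lift R f u) = FreeLieAlgebra.lift R f (eulerDerivation R w u) := by
  induction u using freeLieAlgebra_induction with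
  | of y => simp [eulerDerivation_of, hf]
  | zero => simp
  | smul t u hu => simp [hu]
  | add u v hu hv => simp [hu, hv]
  | lie u v hu hv => simp only [LieHom.map_lie, LieDerivation.apply_lie_eq_add, map_add, hu, hv]

theorem lift_derivation_eq_lie {A : Type*} [LieRing A] [LieAlgebra R A]
    {D : LieDerivation R (FreeLieAlgebra R Y) (FreeLieAlgebra R Y)} {f : Y → A} {a : A}
    (hf : ∀ y, FreeLieAlgebra.lift R f (D (.of R y)) = ⁅a, f y⁆) (u : FreeLieAlgebra R Y) :
    FreeLieAlgebra.lift R f (D u) = ⁅a, FreeLieAlgebra.lift R f u⁆ := by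
  induction u using freeLieAlgebra_induction with
  | of y => simp [hf]
  | zero => simp
  | smul t u hu => simp [hu]
  | add u v hu hv => simp [hu, hv]
  | lie u v hu hv =>
    simp only [LieHom.map_lie, LieDerivation.apply_lie_eq_add, map_add, hu, hv, leibniz_lie a,
      add_comm]

end Euler

section WeightDim

variable {K : Type*} [Field K] {L : Type*} [LieRing L] [LieAlgebra K L]

/-- The dimension of the weight `m` space of `E`. -/
noncomputable def weightDim (E : LieDerivation K L L) (m : ℕ) : ℕ :=
  Module.finrank K (weightSpace E m)

variable {A : Type*} [LieRing A] [LieAlgebra K A] {E : LieDerivation K L L}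
  {EA : LieDerivation K A A} {D : LieDerivation K L L} {a : A} {h : L →ₗ⁅K⁆ A} {s : ℕ}

/-- If `A` is the semidirect product of `L` with a line spanned by an element `a` of weight `s`, its
weight spaces are those of `L`, plus a line in weight `s`. -/
noncomputable def weightSpaceSemidirectEquiv (hD : ∀ u, h (D u) = ⁅a, h u⁆)
    (hbij : Function.Bijective (semidirectDesc a h hD)) (ha : EA a = (s : K) • a)
    (hE : ∀ u, EA (h u) = h (E u)) (m : ℕ) :
    weightSpace EA m ≃ₗ[K]
      weightSpace E m × Module.End.eigenspace (algebraMap K (Module.End K K) s) (m : K) :=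
  let e : (L × K) ≃ₗ[K] A := (LieAlgebra.SemiDirectSum.toProdl _).symm ≪≫ₗ
    LinearEquiv.ofBijective (semidirectDesc a h hD : SemidirectLine D →ₗ[K] A) hbij
  have he (x : L × K) : e x = x.2 • a + h x.1 := rfl
  have hcomap : (weightSpace EA m).comap e.toLinearMap =
      (weightSpace E m).prod (Module.End.eigenspace (algebraMap K (Module.End K K) s) (m : K)) := by
    ext x
    have hEA : EA (e x) = e (E x.1, (s : K) * x.2) := by
      simp [he, ha, hE, smul_smul, mul_comm]
    simp [mem_weightSpace, hEA, ← map_smul, Prod.ext_iff]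
  (e.ofSubmodule' _).symm ≪≫ₗ LinearEquiv.ofEq _ _ hcomap ≪≫ₗ
    { toFun x := (⟨x.1.1, x.2.1⟩, ⟨x.1.2, x.2.2⟩)
      invFun x := ⟨(x.1, x.2), x.1.2, x.2.2⟩
      map_add' _ _ := rfl
      map_smul' _ _ := rfl }

theorem finrank_eigenspace_algebraMap_natCast [CharZero K] (s m : ℕ) :
    Module.finrank K (Module.End.eigenspace (algebraMap K (Module.End K K) s) (m : K)) =
      Pi.single (M := fun _ ↦ ℕ) s 1 m := by
  obtain rfl | hms := eq_or_ne m s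
  · have : Module.End.eigenspace (algebraMap K (Module.End K K) m) (m : K) = ⊤ := by
      ext; simp
    rw [this]
    simp
  · have : Module.End.eigenspace (algebraMap K (Module.End K K) s) (m : K) = ⊥ := by
      ext t
      simp [hms.symm]
    rw [this]
    simp [hms]

theorem finite_weightSpace_of_semidirect (hD : ∀ u, h (D u) = ⁅a, h u⁆)
    (hbij : Function.Bijective (semidirectDesc a h hD)) (ha : EA a = (s : K) • a)
    (hE : ∀ u, EA (h u) = h (E u)) (m : ℕ) [FiniteDimensional K (weightSpace E m)] :
    FiniteDimensional K (weightSpace EA m) :=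
  Module.Finite.equiv (weightSpaceSemidirectEquiv hD hbij ha hE m).symm

theorem weightDim_of_semidirect [CharZero K] (hD : ∀ u, h (D u) = ⁅a, h u⁆)
    (hbij : Function.Bijective (semidirectDesc a h hD)) (ha : EA a = (s : K) • a)
    (hE : ∀ u, EA (h u) = h (E u)) [∀ m, FiniteDimensional K (weightSpace E m)] :
    weightDim EA = Pi.single s 1 + weightDim E := by
  ext m
  rw [weightDim, (weightSpaceSemidirectEquiv hD hbij ha hE m).finrank_eq, Module.finrank_prod,
    finrank_eigenspace_algebraMap_natCast, add_comm]
  rfl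

end WeightDim

section FreeElimination

variable {R : Type*} [CommRing R] {Y : Type*}

/-- Lazard's free generators `(ad a)^k y`, for `y ≠ a`, of the ideal of the free Lie algebra on `Y`
generated by the generators other than `a`. -/
abbrev ElimGenerators (a : Y) := {y : Y // y ≠ a} × ℕ

variable (R) in
/-- The derivation by which `ad a` acts on the free Lie algebra on `ElimGenerators a`. -/
noncomputable def elimDerivation (a : Y) :
    LieDerivation R (FreeLieAlgebra R (ElimGenerators a)) (FreeLieAlgebra R (ElimGenerators a)) :=
  freeDerivation fun p ↦ .of R (p.1, p.2 + 1)

theorem elimDerivation_pow_of (a : Y) (p : ElimGenerators a) (k : ℕ) :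
    ((elimDerivation R a : Module.End R _) ^ k) (FreeLieAlgebra.of R p) =
      FreeLieAlgebra.of R (p.1, p.2 + k) := by
  induction k with
  | zero => simp
  | succ k ih =>
    rw [pow_succ', Module.End.mul_apply, ih]
    exact freeDerivation_of _ _

variable (R) in
/-- The embedding of the free Lie algebra on `ElimGenerators a`. -/
noncomputable def elimHom (a : Y) :
    FreeLieAlgebra R (ElimGenerators a) →ₗ⁅R⁆ FreeLieAlgebra R Y :=
  FreeLieAlgebra.lift R fun p ↦ (LieAlgebra.ad R _ (.of R a) ^ p.2) (.of R p.1)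

theorem elimHom_elimDerivation (a : Y) (u : FreeLieAlgebra R (ElimGenerators a)) :
    elimHom R a (elimDerivation R a u) = ⁅FreeLieAlgebra.of R a, elimHom R a u⁆ :=
  lift_derivation_eq_lie (fun p ↦ by simp [elimDerivation, pow_succ']) u

/-- Lazard's elimination theorem. -/
theorem semidirectDesc_elimHom_bijective (a : Y) :
    Function.Bijective (semidirectDesc (.of R a) (elimHom R a) (elimHom_elimDerivation a)) := by
  classical
  let f : FreeLieAlgebra R Y →ₗ⁅R⁆ SemidirectLine (elimDerivation R a) :=
    FreeLieAlgebra.lift R fun y ↦ if hy : y = a then ⟨0, 1⟩ else ⟨.of R (⟨y, hy⟩, 0), 0⟩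
  have hfa : f (.of R a) = ⟨0, 1⟩ := by simp [f]
  have hfy (y : {y // y ≠ a}) : f (.of R y) = ⟨.of R (y, 0), 0⟩ := by simp [f, y.2]
  have hfh : f.comp (elimHom R a) = LieAlgebra.SemiDirectSum.inl _ :=
    FreeLieAlgebra.hom_ext fun p ↦ by
      simp [elimHom, apply_ad_pow_eq_left hfa (hfy p.1), elimDerivation_pow_of]
  refine semidirectDesc_bijective _ ?_ f hfa fun u ↦ LieHom.congr_fun hfh u
  rw [eq_top_iff, ← lieSpan_range_freeLieAlgebra_of_eq_top, LieSubalgebra.lieSpan_le]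
  rintro _ ⟨y, rfl⟩
  refine LieSubalgebra.subset_lieSpan ?_
  obtain rfl | hy := eq_or_ne y a
  · exact Set.mem_insert _ _
  · exact Or.inr ⟨.of R (⟨y, hy⟩, 0), by simp [elimHom]⟩

/-- The weights of the elements `(ad a)^k y` when `a` has weight `s`. -/
def adOrbitWeight (w : Y → ℕ) (s : ℕ) (p : Y × ℕ) : ℕ := w p.1 + p.2 * s

/-- The weights of Lazard's generators. -/
abbrev elimWeight (w : Y → ℕ) (a : Y) : ElimGenerators a → ℕ :=
  adOrbitWeight (fun y : {y // y ≠ a} ↦ w y) (w a)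

theorem apply_ad_pow_eq_smul {A : Type*} [LieRing A] [LieAlgebra R A] {E : LieDerivation R A A}
    {a x : A} {s m : ℕ} (ha : E a = (s : R) • a) (hx : E x = (m : R) • x) (k : ℕ) :
    E ((LieAlgebra.ad R A a ^ k) x) = ((m + k * s : ℕ) : R) • (LieAlgebra.ad R A a ^ k) x := by
  induction k with
  | zero => simpa using hx
  | succ k ih =>
    rw [pow_succ', Module.End.mul_apply, LieAlgebra.ad_apply, LieDerivation.apply_lie_eq_add, ih,
      ha, lie_smul, smul_lie]
    push_cast
    module

theorem eulerDerivation_elimHom (w : Y → ℕ) (a : Y) (u : FreeLieAlgebra R (ElimGenerators a)) :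
    eulerDerivation R w (elimHom R a u) =
      elimHom R a (eulerDerivation R (elimWeight w a) u) :=
  apply_lift_eq_lift_eulerDerivation _ (fun p ↦ apply_ad_pow_eq_smul (eulerDerivation_of w a)
    (eulerDerivation_of w p.1) p.2) u

end FreeElimination

/-! ### Generating series -/

section FiberSeries

variable {Y Z : Type*} {w : Y → ℕ} {v : Z → ℕ} {s : ℕ}

/-- A positive grading of a set of generators with finitely many generators in each degree. -/
structure IsLocallyFinite (w : Y → ℕ) : Prop where
  pos : ∀ y, 1 ≤ w y
  finite_fiber : ∀ m, Finite {y // w y = m}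

/-- The series `∑ X ^ w y` counting the generators by weight. -/
noncomputable def fiberSeries (w : Y → ℕ) : ℚ⟦X⟧ := mk fun m ↦ Nat.card {y // w y = m}

theorem fiberSeries_comp_equiv (e : Z ≃ Y) (w : Y → ℕ) :
    fiberSeries (w ∘ e) = fiberSeries w := by
  ext m
  simp only [fiberSeries, coeff_mk]
  exact congrArg _ (Nat.card_congr (e.subtypeEquiv fun _ ↦ Iff.rfl))

theorem fiberSeries_const_of_unique [Unique Y] (s : ℕ) :
    fiberSeries (fun _ : Y ↦ s) = X ^ s := by
  ext m
  by_cases h : s = m <;> simp [fiberSeries, coeff_X_pow, h, eq_comm (a := m)]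

theorem fiberSeries_add_const (w : Y → ℕ) (s : ℕ) :
    fiberSeries (fun y ↦ w y + s) = X ^ s * fiberSeries w := by
  ext m
  rw [coeff_X_pow_mul']
  simp only [fiberSeries, coeff_mk]
  split_ifs with h
  · exact congrArg _ (Nat.card_congr (Equiv.subtypeEquivRight fun y ↦ by omega))
  · have : IsEmpty {y // w y + s = m} := ⟨fun y ↦ h (y.2 ▸ Nat.le_add_left _ _)⟩
    simp

theorem IsLocallyFinite.sumElim (hw : IsLocallyFinite w) (hv : IsLocallyFinite v) :
    IsLocallyFinite (Sum.elim w v) where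
  pos := Sum.rec hw.pos hv.pos
  finite_fiber m :=
    have := hw.finite_fiber m
    have := hv.finite_fiber m
    Finite.of_equiv ({y // w y = m} ⊕ {z // v z = m})
      (Equiv.subtypeSum (p := fun x ↦ Sum.elim w v x = m)).symm

theorem fiberSeries_sumElim (hw : IsLocallyFinite w) (hv : IsLocallyFinite v) :
    fiberSeries (Sum.elim w v) = fiberSeries w + fiberSeries v := by
  ext m
  have := hw.finite_fiber m
  have := hv.finite_fiber m
  simp only [fiberSeries, coeff_mk, map_add, ← Nat.cast_add]
  rw [← Nat.card_sum]
  exact congrArg _ (Nat.card_congr (Equiv.subtypeSum (p := fun x ↦ Sum.elim w v x = m)))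

theorem IsLocallyFinite.comp_injective (hw : IsLocallyFinite w) {f : Z → Y}
    (hf : Function.Injective f) : IsLocallyFinite (w ∘ f) where
  pos z := hw.pos (f z)
  finite_fiber m :=
    have := hw.finite_fiber m
    Finite.of_injective (Subtype.map (q := fun y ↦ w y = m) f fun _ h ↦ h)
      (Subtype.map_injective _ hf)

theorem isLocallyFinite_const [Finite Y] (hs : 1 ≤ s) : IsLocallyFinite fun _ : Y ↦ s where
  pos _ := hs
  finite_fiber _ := inferInstance

theorem IsLocallyFinite.adOrbitWeight (hw : IsLocallyFinite w) (hs : 1 ≤ s) :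
    IsLocallyFinite (adOrbitWeight w s) where
  pos p := (hw.pos p.1).trans (Nat.le_add_right _ _)
  finite_fiber m := by
    have hfin : (w ⁻¹' Set.Iic m).Finite := by
      rw [← Set.biUnion_preimage_singleton]
      exact (Set.finite_Iic m).biUnion fun k _ ↦ hw.finite_fiber k
    refine ((hfin.prod (Set.finite_Iic m)).subset fun p hp ↦ ?_).to_subtype
    have hpm : w p.1 + p.2 * s = m := hp
    have := Nat.le_mul_of_pos_right p.2 hs
    exact ⟨by simp; omega, by simp; omega⟩

theorem fiberSeries_adOrbitWeight (hw : IsLocallyFinite w) (hs : 1 ≤ s) :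
    (1 - X ^ s) * fiberSeries (adOrbitWeight w s) = fiberSeries w := by
  let e : Y ⊕ (Y × ℕ) ≃ Y × ℕ :=
    { toFun := Sum.elim (·, 0) fun p ↦ (p.1, p.2 + 1)
      invFun
        | (y, 0) => Sum.inl y
        | (y, k + 1) => Sum.inr (y, k)
      left_inv := by rintro (y | p) <;> rfl
      right_inv := by rintro ⟨y, _ | k⟩ <;> rfl }
  have he : adOrbitWeight w s ∘ e = Sum.elim w fun p ↦ adOrbitWeight w s p + s := by
    ext (y | p)
    · simp [e, adOrbitWeight]
    · simp [e, adOrbitWeight, add_mul, add_assoc]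
  have hshift : IsLocallyFinite fun p ↦ adOrbitWeight w s p + s := by
    simpa [← Function.comp_assoc, he] using
      (hw.adOrbitWeight hs).comp_injective (e.injective.comp Sum.inr_injective)
  have hsplit := fiberSeries_comp_equiv e (adOrbitWeight w s)
  rw [he, fiberSeries_sumElim hw hshift, fiberSeries_add_const] at hsplit
  linear_combination -hsplit

theorem fiberSeries_eq_X_pow_add (hw : IsLocallyFinite w) (a : Y) :
    fiberSeries w = X ^ w a + fiberSeries fun y : {y // y ≠ a} ↦ w y := by
  classical
  have hsplit : w ∘ Equiv.sumCompl (· = a) =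
      Sum.elim (fun _ ↦ w a) fun y : {y // y ≠ a} ↦ w y := by
    ext (y | y)
    · simp [y.2]
    · rfl
  have hne : IsLocallyFinite fun y : {y // y ≠ a} ↦ w y :=
    hw.comp_injective Subtype.val_injective
  rw [← fiberSeries_comp_equiv (Equiv.sumCompl (· = a)) w, hsplit,
    fiberSeries_sumElim (isLocallyFinite_const (hw.pos a)) hne, fiberSeries_const_of_unique]

theorem fiberSeries_elimWeight (hw : IsLocallyFinite w) (a : Y) :
    (1 - X ^ w a) * (1 - fiberSeries (elimWeight w a)) = 1 - fiberSeries w := by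
  have hne : IsLocallyFinite fun y : {y // y ≠ a} ↦ w y :=
    hw.comp_injective Subtype.val_injective
  linear_combination fiberSeries_eq_X_pow_add hw a - fiberSeries_adOrbitWeight hne (hw.pos a)

end FiberSeries

section EulerProduct

variable {s : ℕ}

/-- The series `∑ m * d m * X ^ m / (1 - X ^ m)`, that is, `-X` times the logarithmic derivative of
`∏ (1 - X ^ m) ^ d m`. -/
noncomputable def divisorSeries (d : ℕ → ℕ) : ℚ⟦X⟧ :=
  mk fun k ↦ ∑ m ∈ k.divisors, (m : ℚ) * d m

theorem divisorSeries_add (d d' : ℕ → ℕ) :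
    divisorSeries (d + d') = divisorSeries d + divisorSeries d' := by
  ext k
  simp [divisorSeries, mul_add, Finset.sum_add_distrib]

theorem divisorSeries_single_mul (hs : 1 ≤ s) :
    divisorSeries (Pi.single s 1) * (1 - X ^ s) = C (s : ℚ) * X ^ s := by
  have hcoeff (k : ℕ) : coeff k (divisorSeries (Pi.single s 1)) =
      if s ∣ k ∧ k ≠ 0 then (s : ℚ) else 0 := by
    simp [divisorSeries, Pi.single_apply]
  ext k
  rw [mul_sub, mul_one, map_sub, coeff_mul_X_pow', coeff_C_mul, coeff_X_pow, hcoeff]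
  obtain hk | hk := lt_or_ge k s
  · have hdvd : ¬(s ∣ k ∧ k ≠ 0) := fun h ↦
      hk.not_ge (Nat.le_of_dvd (Nat.pos_of_ne_zero h.2) h.1)
    simp [hk.not_ge, hdvd, hk.ne]
  · obtain ⟨j, rfl⟩ := Nat.exists_eq_add_of_le hk
    obtain rfl | hj := eq_or_ne j 0
    · simp [hcoeff, Nat.one_le_iff_ne_zero.1 hs]
    · simp [hcoeff, hj]

/-- The obstruction to `P = ∏ (1 - X ^ m) ^ d m`, obtained by comparing logarithmic derivatives. -/
noncomputable def eulerDefect (d : ℕ → ℕ) (P : ℚ⟦X⟧) : ℚ⟦X⟧ :=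
  divisorSeries d * P + X * derivative ℚ P

theorem eulerDefect_single_add (hs : 1 ≤ s) (d : ℕ → ℕ) (P : ℚ⟦X⟧) :
    eulerDefect (Pi.single s 1 + d) ((1 - X ^ s) * P) = (1 - X ^ s) * eulerDefect d P := by
  have hderiv : X * derivative ℚ (1 - X ^ s : ℚ⟦X⟧) = -(C (s : ℚ) * X ^ s) := by
    obtain ⟨j, rfl⟩ := Nat.exists_eq_add_of_le' hs
    simp only [map_sub, Derivation.map_one_eq_zero, Derivation.leibniz_pow, derivative_X,
      Nat.add_sub_cancel, smul_eq_mul, nsmul_eq_mul, map_natCast]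
    ring
  simp only [eulerDefect, divisorSeries_add, Derivation.leibniz, smul_eq_mul]
  linear_combination P * divisorSeries_single_mul hs + P * hderiv

end EulerProduct

/-! ### The weighted Witt formula -/

section EliminationInduction

universe u

variable {Y : Type u} {w : Y → ℕ} {s : ℕ}

theorem IsLocallyFinite.elimWeight (hw : IsLocallyFinite w) (a : Y) :
    IsLocallyFinite (elimWeight w a) :=
  (hw.comp_injective Subtype.val_injective).adOrbitWeight (hw.pos a)

theorem coeff_zero_fiberSeries (hw : IsLocallyFinite w) : coeff 0 (fiberSeries w) = 0 := by
  have : IsEmpty {y // w y = 0} := ⟨fun y ↦ Nat.not_succ_le_zero _ (y.2 ▸ hw.pos y.1)⟩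
  simp [fiberSeries]

theorem natCard_fiber_elimWeight_add_one (hw : IsLocallyFinite w) (a : Y) :
    Nat.card {p // elimWeight w a p = w a} + 1 = Nat.card {y // w y = w a} := by
  have hseries : fiberSeries (elimWeight w a) + X ^ w a =
      fiberSeries w + fiberSeries (elimWeight w a) * X ^ w a := by
    linear_combination -fiberSeries_elimWeight hw a
  have hcoeff := congrArg (coeff (w a)) hseries
  rw [map_add, map_add, coeff_X_pow_self, coeff_mul_X_pow', if_pos le_rfl, Nat.sub_self,
    coeff_zero_fiberSeries (hw.elimWeight a), add_zero] at hcoeff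
  simp only [fiberSeries, coeff_mk] at hcoeff
  exact_mod_cast hcoeff

variable {p : ∀ {Y : Type u}, (Y → ℕ) → Prop}

/-- Eliminating a generator of minimal weight `s` creates no new generators of weight `s`, so that
their number drops. -/
theorem elim_induction_of_le
    (base : ∀ {Y : Type u} {w : Y → ℕ}, IsLocallyFinite w → (∀ y, s < w y) → p w)
    (step : ∀ {Y : Type u} {w : Y → ℕ} (a : Y), IsLocallyFinite w → p (elimWeight w a) → p w)
    (hw : IsLocallyFinite w) (hs : ∀ y, s ≤ w y) : p w := by
  have : Finite {y // w y = s} := hw.finite_fiber s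
  induction hc : Nat.card {y // w y = s} generalizing Y with
  | zero =>
    have hempty : IsEmpty {y // w y = s} := Finite.card_eq_zero_iff.1 hc
    exact base hw fun y ↦ (hs y).lt_of_ne fun hy ↦ hempty.false ⟨y, hy.symm⟩
  | succ c ih =>
    obtain ⟨a, rfl⟩ := (Finite.card_pos_iff.1 (hc ▸ c.succ_pos) : Nonempty {y // w y = s})
    have hw' := hw.elimWeight a
    have hcard := natCard_fiber_elimWeight_add_one hw a
    exact step a hw (ih hw' (fun q ↦ (hs q.1).trans (Nat.le_add_right _ _))
      (hw'.finite_fiber _) (by omega))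

theorem elim_induction (N : ℕ)
    (base : ∀ {Y : Type u} {w : Y → ℕ}, IsLocallyFinite w → (∀ y, N < w y) → p w)
    (step : ∀ {Y : Type u} {w : Y → ℕ} (a : Y), IsLocallyFinite w → p (elimWeight w a) → p w)
    (hw : IsLocallyFinite w) : p w := by
  induction N with
  | zero => exact base hw hw.pos
  | succ N ih => exact ih fun hw hN ↦ elim_induction_of_le base step hw hN

end EliminationInduction

section Witt

variable {K : Type*} [Field K] [CharZero K] {Y : Type*} {w : Y → ℕ}

theorem weightSpace_eulerDerivation_eq_bot {N m : ℕ} (hw : ∀ y, N < w y) (hm : m ≤ N) :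
    weightSpace (eulerDerivation K w) m = ⊥ :=
  weightSpace_eq_bot_of_lt (Nat.lt_succ_of_le hm) (weightGE_eulerDerivation_eq_top w hw)

theorem finite_weightSpace_eulerDerivation (hw : IsLocallyFinite w) (m : ℕ) :
    FiniteDimensional K (weightSpace (eulerDerivation K w) m) := by
  refine elim_induction (p := fun w ↦ FiniteDimensional K (weightSpace (eulerDerivation K w) m))
    m (fun _ h ↦ ?_) (fun a _ h ↦ ?_) hw
  · rw [weightSpace_eulerDerivation_eq_bot h le_rfl]
    infer_instance
  · exact finite_weightSpace_of_semidirect _ (semidirectDesc_elimHom_bijective a)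
      (eulerDerivation_of _ a) (eulerDerivation_elimHom _ a) m

theorem weightDim_eulerDerivation (hw : IsLocallyFinite w) (a : Y) :
    weightDim (eulerDerivation K w) =
      Pi.single (w a) 1 + weightDim (eulerDerivation K (elimWeight w a)) :=
  have := finite_weightSpace_eulerDerivation (K := K) (hw.elimWeight a)
  weightDim_of_semidirect _ (semidirectDesc_elimHom_bijective a) (eulerDerivation_of w a)
    (eulerDerivation_elimHom w a)

theorem X_pow_dvd_eulerDefect {d : ℕ → ℕ} {N : ℕ} (hd : ∀ m ≤ N, d m = 0)
    (hw : ∀ y, N < w y) : X ^ (N + 1) ∣ eulerDefect d (1 - fiberSeries w) := by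
  have hdiv : X ^ (N + 1) ∣ divisorSeries d := X_pow_dvd_iff.2 fun k hk ↦ by
    rw [divisorSeries, coeff_mk]
    refine Finset.sum_eq_zero fun m hm ↦ ?_
    rw [hd m ((Nat.divisor_le hm).trans (Nat.le_of_lt_succ hk)), Nat.cast_zero, mul_zero]
  have hderiv : X ^ (N + 1) ∣ X * derivative ℚ (1 - fiberSeries w) := by
    rw [pow_succ']
    refine mul_dvd_mul_left X (X_pow_dvd_iff.2 fun k hk ↦ ?_)
    have : IsEmpty {y // w y = k + 1} := ⟨fun y ↦ by have := hw y; omega⟩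
    simp [coeff_derivative, fiberSeries]
  exact dvd_add (hdiv.mul_right _) hderiv

/-- The Witt formula for a weighted free Lie algebra. -/
theorem eulerDefect_eulerDerivation (hw : IsLocallyFinite w) :
    eulerDefect (weightDim (eulerDerivation K w)) (1 - fiberSeries w) = 0 := by
  ext N
  suffices X ^ (N + 1) ∣ eulerDefect (weightDim (eulerDerivation K w)) (1 - fiberSeries w) from
    X_pow_dvd_iff.1 this N N.lt_succ_self
  refine elim_induction (p := fun w ↦
    X ^ (N + 1) ∣ eulerDefect (weightDim (eulerDerivation K w)) (1 - fiberSeries w)) N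
    (fun _ h ↦ ?_) (fun a hw h ↦ ?_) hw
  · refine X_pow_dvd_eulerDefect (fun m hm ↦ ?_) h
    rw [weightDim, weightSpace_eulerDerivation_eq_bot h hm, finrank_bot]
  · rw [weightDim_eulerDerivation hw a, ← fiberSeries_elimWeight hw a,
      eulerDefect_single_add (hw.pos a)]
    exact h.mul_left _

end Witt

/-! ### One-relator Lie algebras -/

section Quotient

variable {R : Type*} [CommRing R] {L A : Type*} [LieRing L] [LieAlgebra R L] [LieRing A]
  [LieAlgebra R A]

/-- The quotient map as a homomorphism of Lie algebras. -/
def quotientMk (I : LieIdeal R L) : L →ₗ⁅R⁆ L ⧸ I where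
  toLinearMap := I.toSubmodule.mkQ
  map_lie' := rfl

theorem quotientMk_surjective (I : LieIdeal R L) : Function.Surjective (quotientMk I) :=
  Submodule.mkQ_surjective _

theorem quotientMk_eq_zero {I : LieIdeal R L} {u : L} : quotientMk I u = 0 ↔ u ∈ I :=
  Submodule.Quotient.mk_eq_zero _

theorem quotientMk_eq_zero_of_mem {X : Set L} {x : L} (hx : x ∈ X) :
    quotientMk (LieSubmodule.lieSpan R L X) x = 0 :=
  quotientMk_eq_zero.2 (LieSubmodule.subset_lieSpan hx)

/-- The homomorphism induced on the quotient by an ideal generated by elements of the kernel. -/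
def quotientDesc (f : L →ₗ⁅R⁆ A) {X : Set L} (hf : ∀ x ∈ X, f x = 0) :
    (L ⧸ LieSubmodule.lieSpan R L X) →ₗ⁅R⁆ A where
  toLinearMap := (LieSubmodule.lieSpan R L X).toSubmodule.liftQ (f : L →ₗ[R] A) <|
    show LieSubmodule.lieSpan R L X ≤ f.ker from LieSubmodule.lieSpan_le.2 fun x hx ↦
      f.mem_ker.2 (hf x hx)
  map_lie' {x y} := by
    obtain ⟨u, rfl⟩ := quotientMk_surjective _ x
    obtain ⟨v, rfl⟩ := quotientMk_surjective _ y
    exact f.map_lie u v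

@[simp]
theorem quotientDesc_quotientMk (f : L →ₗ⁅R⁆ A) {X : Set L} (hf : ∀ x ∈ X, f x = 0) (u : L) :
    quotientDesc f hf (quotientMk _ u) = f u :=
  rfl

theorem derivation_mem_lieSpan {D : LieDerivation R L L} {X : Set L}
    (hX : ∀ x ∈ X, D x ∈ LieSubmodule.lieSpan R L X) {u : L}
    (hu : u ∈ LieSubmodule.lieSpan R L X) : D u ∈ LieSubmodule.lieSpan R L X := by
  let I : LieIdeal R L :=
    { (LieSubmodule.lieSpan R L X).toSubmodule ⊓
        (LieSubmodule.lieSpan R L X).toSubmodule.comap (D : L →ₗ[R] L) with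
      lie_mem := fun {v u} hu ↦ by
        have hu' : u ∈ LieSubmodule.lieSpan R L X := hu.1
        have hDu : D u ∈ LieSubmodule.lieSpan R L X := hu.2
        refine ⟨LieSubmodule.lie_mem _ hu', ?_⟩
        change D ⁅v, u⁆ ∈ LieSubmodule.lieSpan R L X
        rw [D.apply_lie_eq_add]
        exact add_mem (LieSubmodule.lie_mem _ hDu) (LieSubmodule.lie_mem _ hu') }
  have hI : LieSubmodule.lieSpan R L X ≤ I :=
    LieSubmodule.lieSpan_le.2 fun x hx ↦ ⟨LieSubmodule.subset_lieSpan hx, hX x hx⟩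
  exact (hI hu).2

/-- The derivation induced on the quotient by an ideal whose generators are mapped into it. -/
def quotientDerivation (D : LieDerivation R L L) {X : Set L}
    (hX : ∀ x ∈ X, D x ∈ LieSubmodule.lieSpan R L X) :
    LieDerivation R (L ⧸ LieSubmodule.lieSpan R L X) (L ⧸ LieSubmodule.lieSpan R L X) where
  toLinearMap := Submodule.mapQ _ _ (D : L →ₗ[R] L) fun _ ↦ derivation_mem_lieSpan hX
  leibniz' x y := by
    obtain ⟨u, rfl⟩ := quotientMk_surjective _ x
    obtain ⟨v, rfl⟩ := quotientMk_surjective _ y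
    exact congrArg (quotientMk _) (D.leibniz' u v)

@[simp]
theorem quotientDerivation_quotientMk (D : LieDerivation R L L) {X : Set L}
    (hX : ∀ x ∈ X, D x ∈ LieSubmodule.lieSpan R L X) (u : L) :
    quotientDerivation D hX (quotientMk _ u) = quotientMk _ (D u) :=
  rfl

end Quotient

section OneRelator

variable {R : Type*} [CommRing R] {Y : Type*} {a b : Y}

/-- The generators other than `a` and `b`. -/
abbrev OtherGenerators (a b : Y) := {y : Y // y ≠ a ∧ y ≠ b}

/-- The relation `⁅a, b⁆ + ρ`, where `ρ` does not involve the generators `a` and `b`. -/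
noncomputable def surfaceRelation (a b : Y) (ρ : FreeLieAlgebra R (OtherGenerators a b)) :
    FreeLieAlgebra R Y :=
  ⁅FreeLieAlgebra.of R a, FreeLieAlgebra.of R b⁆ + FreeLieAlgebra.lift R (fun j ↦ .of R j.1) ρ

/-- The Lie algebra with generators `Y` and the single relation `⁅a, b⁆ + ρ`. When `ρ` is a sum of
brackets pairing up the other generators, it is the graded Lie algebra of a surface group. -/
abbrev SurfaceLieAlgebra (a b : Y) (ρ : FreeLieAlgebra R (OtherGenerators a b)) :=
  FreeLieAlgebra R Y ⧸ LieSubmodule.lieSpan R (FreeLieAlgebra R Y) {surfaceRelation a b ρ}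

variable (ρ : FreeLieAlgebra R (OtherGenerators a b))

/-- The image of the generator `y` in the quotient `SurfaceLieAlgebra a b ρ`. -/
noncomputable def surfaceOf (y : Y) : SurfaceLieAlgebra a b ρ := quotientMk _ (.of R y)

theorem lift_surfaceOf (u : FreeLieAlgebra R Y) :
    FreeLieAlgebra.lift R (surfaceOf ρ) u = quotientMk _ u := by
  have : FreeLieAlgebra.lift R (surfaceOf ρ) = quotientMk _ :=
    FreeLieAlgebra.hom_ext fun y ↦ by simp [surfaceOf]
  rw [this]

theorem surfaceOf_lie_surfaceOf :
    ⁅surfaceOf ρ a, surfaceOf ρ b⁆ =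
      -FreeLieAlgebra.lift R (fun j ↦ surfaceOf ρ j.1) ρ := by
  have hrel : FreeLieAlgebra.lift R (surfaceOf ρ) (surfaceRelation a b ρ) = 0 := by
    rw [lift_surfaceOf]
    exact quotientMk_eq_zero_of_mem (Set.mem_singleton _)
  have hcomp : (FreeLieAlgebra.lift R (surfaceOf ρ)).comp
      (FreeLieAlgebra.lift R fun j ↦ .of R j.1) =
        FreeLieAlgebra.lift R fun j : OtherGenerators a b ↦ surfaceOf ρ j.1 :=
    FreeLieAlgebra.hom_ext fun j ↦ by simp
  rw [← hcomp]
  exact eq_neg_of_add_eq_zero_left (by simpa [surfaceRelation] using hrel)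

theorem lieSpan_range_surfaceOf_eq_top :
    LieSubalgebra.lieSpan R (SurfaceLieAlgebra a b ρ) (Set.range (surfaceOf ρ)) = ⊤ := by
  have hmem (u : FreeLieAlgebra R Y) : quotientMk _ u ∈
      LieSubalgebra.lieSpan R (SurfaceLieAlgebra a b ρ) (Set.range (surfaceOf ρ)) := by
    induction u using freeLieAlgebra_induction with
    | of y => exact LieSubalgebra.subset_lieSpan ⟨y, rfl⟩
    | zero => simp
    | smul t u hu => simpa using SMulMemClass.smul_mem t hu
    | add u v hu hv => simpa using add_mem hu hv
    | lie u v hu hv => simpa using LieSubalgebra.lie_mem _ hu hv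
  exact eq_top_iff.2 ((quotientMk_surjective _).forall.2 fun u _ ↦ hmem u)

/-- Free generators of the ideal generated by the generators other than `a`: the relation expresses
all `(ad a)^k b` with `k ≥ 1` through the `(ad a)^k y` with `y ≠ b`. -/
abbrev SurfaceKernelGenerators (a b : Y) := Unit ⊕ (OtherGenerators a b × ℕ)

/-- The derivation by which `ad a` acts on the free Lie algebra on `SurfaceKernelGenerators a b`. -/
noncomputable def surfaceDerivation :
    LieDerivation R (FreeLieAlgebra R (SurfaceKernelGenerators a b))
      (FreeLieAlgebra R (SurfaceKernelGenerators a b)) :=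
  freeDerivation <| Sum.elim (fun _ ↦ -FreeLieAlgebra.lift R (fun j ↦ .of R (.inr (j, 0))) ρ)
    fun p ↦ .of R (.inr (p.1, p.2 + 1))

theorem surfaceDerivation_pow_of (j : OtherGenerators a b) (k : ℕ) :
    ((surfaceDerivation ρ : Module.End R (FreeLieAlgebra R (SurfaceKernelGenerators a b))) ^ k)
      (.of R (.inr (j, 0))) = .of R (.inr (j, k)) := by
  induction k with
  | zero => rfl
  | succ k ih =>
    rw [pow_succ', Module.End.mul_apply, ih]
    exact freeDerivation_of _ _

/-- The embedding of the free Lie algebra on `SurfaceKernelGenerators a b`. -/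
noncomputable def surfaceKernelHom :
    FreeLieAlgebra R (SurfaceKernelGenerators a b) →ₗ⁅R⁆ SurfaceLieAlgebra a b ρ :=
  FreeLieAlgebra.lift R <| Sum.elim (fun _ ↦ surfaceOf ρ b)
    fun p ↦ (LieAlgebra.ad R _ (surfaceOf ρ a) ^ p.2) (surfaceOf ρ p.1.1)

@[simp]
theorem surfaceKernelHom_of_inl (t : Unit) :
    surfaceKernelHom ρ (.of R (.inl t)) = surfaceOf ρ b := by
  simp [surfaceKernelHom]

@[simp]
theorem surfaceKernelHom_of_inr (p : OtherGenerators a b × ℕ) :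
    surfaceKernelHom ρ (.of R (.inr p)) =
      (LieAlgebra.ad R _ (surfaceOf ρ a) ^ p.2) (surfaceOf ρ p.1.1) := by
  simp [surfaceKernelHom]

theorem surfaceKernelHom_surfaceDerivation
    (u : FreeLieAlgebra R (SurfaceKernelGenerators a b)) :
    surfaceKernelHom ρ (surfaceDerivation ρ u) = ⁅surfaceOf ρ a, surfaceKernelHom ρ u⁆ := by
  refine lift_derivation_eq_lie ?_ u
  rintro (_ | p)
  · have hcomp : (surfaceKernelHom ρ).comp (FreeLieAlgebra.lift R fun j ↦ .of R (.inr (j, 0))) =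
        FreeLieAlgebra.lift R fun j : OtherGenerators a b ↦ surfaceOf ρ j.1 :=
      FreeLieAlgebra.hom_ext fun j ↦ by simp
    rw [Sum.elim_inl, surfaceOf_lie_surfaceOf, ← hcomp]
    simp [surfaceDerivation, surfaceKernelHom]
  · simp [surfaceDerivation, pow_succ']

open Classical in
/-- The values on the generators of the inverse of the isomorphism
`semidirectDesc_surfaceKernelHom_bijective`. -/
noncomputable def surfaceSplitOf (y : Y) : SemidirectLine (surfaceDerivation ρ) :=
  if ha : y = a then ⟨0, 1⟩
  else if hb : y = b then ⟨.of R (.inl ()), 0⟩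
  else ⟨.of R (.inr (⟨y, ha, hb⟩, 0)), 0⟩

theorem surfaceSplitOf_left : surfaceSplitOf ρ a = ⟨0, 1⟩ := by
  simp [surfaceSplitOf]

theorem surfaceSplitOf_right (hab : b ≠ a) :
    surfaceSplitOf ρ b = ⟨.of R (.inl ()), 0⟩ := by
  simp [surfaceSplitOf, hab]

theorem surfaceSplitOf_other (j : OtherGenerators a b) :
    surfaceSplitOf ρ j.1 = ⟨.of R (.inr (j, 0)), 0⟩ := by
  simp [surfaceSplitOf, j.2.1, j.2.2]

theorem lift_surfaceSplitOf_surfaceRelation (hab : b ≠ a) :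
    FreeLieAlgebra.lift R (surfaceSplitOf ρ) (surfaceRelation a b ρ) = 0 := by
  have hcomp : (FreeLieAlgebra.lift R (surfaceSplitOf ρ)).comp
      (FreeLieAlgebra.lift R fun j ↦ .of R j.1) = (LieAlgebra.SemiDirectSum.inl _).comp
        (FreeLieAlgebra.lift R fun j : OtherGenerators a b ↦ .of R (.inr (j, 0))) :=
    FreeLieAlgebra.hom_ext fun j ↦ by simp [surfaceSplitOf_other]
  have hDb : surfaceDerivation ρ (.of R (.inl ())) =
      -FreeLieAlgebra.lift R (fun j ↦ .of R (.inr (j, 0))) ρ := freeDerivation_of _ _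
  rw [surfaceRelation, map_add, LieHom.map_lie, ← LieHom.comp_apply, hcomp, LieHom.comp_apply,
    FreeLieAlgebra.lift_of_apply, FreeLieAlgebra.lift_of_apply, surfaceSplitOf_left,
    surfaceSplitOf_right ρ hab]
  ext <;> simp [hDb]

theorem semidirectDesc_surfaceKernelHom_bijective (hab : b ≠ a) :
    Function.Bijective (semidirectDesc (surfaceOf ρ a) (surfaceKernelHom ρ)
      (surfaceKernelHom_surfaceDerivation ρ)) := by
  let f : SurfaceLieAlgebra a b ρ →ₗ⁅R⁆ SemidirectLine (surfaceDerivation ρ) :=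
    quotientDesc (FreeLieAlgebra.lift R (surfaceSplitOf ρ)) fun x hx ↦
      hx ▸ lift_surfaceSplitOf_surfaceRelation ρ hab
  have hf (y : Y) : f (surfaceOf ρ y) = surfaceSplitOf ρ y := by simp [f, surfaceOf]
  have hfa : f (surfaceOf ρ a) = ⟨0, 1⟩ := (hf a).trans (surfaceSplitOf_left ρ)
  have hfh : f.comp (surfaceKernelHom ρ) = LieAlgebra.SemiDirectSum.inl _ := by
    refine FreeLieAlgebra.hom_ext ?_
    rintro (_ | ⟨j, k⟩)
    · simp [hf, surfaceSplitOf_right ρ hab]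
    · have hj := (hf j.1).trans (surfaceSplitOf_other ρ j)
      simp [apply_ad_pow_eq_left hfa hj, surfaceDerivation_pow_of]
  refine semidirectDesc_bijective _ ?_ f hfa fun u ↦ LieHom.congr_fun hfh u
  rw [eq_top_iff, ← lieSpan_range_surfaceOf_eq_top, LieSubalgebra.lieSpan_le]
  rintro _ ⟨y, rfl⟩
  refine LieSubalgebra.subset_lieSpan ?_
  obtain rfl | ha := eq_or_ne y a
  · exact Set.mem_insert _ _
  obtain rfl | hb := eq_or_ne y b
  · exact Or.inr ⟨.of R (.inl ()), by simp⟩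
  · exact Or.inr ⟨.of R (.inr (⟨y, ha, hb⟩, 0)), by simp⟩

end OneRelator

section SurfaceWeight

variable {R : Type*} [CommRing R] {Y : Type*} {a b : Y} (w : Y → ℕ)
  {ρ : FreeLieAlgebra R (OtherGenerators a b)}

theorem eulerDerivation_surfaceRelation
    (hρ : eulerDerivation R (fun j ↦ w j.1) ρ = ((w a + w b : ℕ) : R) • ρ) :
    eulerDerivation R w (surfaceRelation a b ρ) =
      ((w a + w b : ℕ) : R) • surfaceRelation a b ρ := by
  rw [surfaceRelation, map_add,
    apply_lift_eq_lift_eulerDerivation _ (fun j ↦ eulerDerivation_of w j.1), hρ, map_smul,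
    smul_add, LieDerivation.apply_lie_eq_add, eulerDerivation_of, eulerDerivation_of, lie_smul,
    smul_lie, ← add_smul]
  push_cast
  rw [add_comm (w a : R)]

/-- The derivation which multiplies the image of each generator `y` by `w y`, for a relation which
is homogeneous with respect to `w`. -/
noncomputable def surfaceEuler
    (hρ : eulerDerivation R (fun j ↦ w j.1) ρ = ((w a + w b : ℕ) : R) • ρ) :
    LieDerivation R (SurfaceLieAlgebra a b ρ) (SurfaceLieAlgebra a b ρ) :=
  quotientDerivation (eulerDerivation R w) fun x hx ↦ by
    rw [Set.mem_singleton_iff.1 hx, eulerDerivation_surfaceRelation w hρ]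
    exact SMulMemClass.smul_mem _ (LieSubmodule.subset_lieSpan (Set.mem_singleton _))

variable (hρ : eulerDerivation R (fun j ↦ w j.1) ρ = ((w a + w b : ℕ) : R) • ρ)

theorem surfaceEuler_surfaceOf (y : Y) :
    surfaceEuler w hρ (surfaceOf ρ y) = (w y : R) • surfaceOf ρ y :=
  (quotientDerivation_quotientMk _ _ _).trans <|
    (congrArg (quotientMk _) (eulerDerivation_of w y)).trans (map_smul _ _ _)

/-- The weights of `SurfaceKernelGenerators a b`. -/
def surfaceKernelWeight (a b : Y) : SurfaceKernelGenerators a b → ℕ :=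
  Sum.elim (fun _ ↦ w b) (adOrbitWeight (fun j : OtherGenerators a b ↦ w j) (w a))

theorem surfaceEuler_surfaceKernelHom (u : FreeLieAlgebra R (SurfaceKernelGenerators a b)) :
    surfaceEuler w hρ (surfaceKernelHom ρ u) =
      surfaceKernelHom ρ (eulerDerivation R (surfaceKernelWeight w a b) u) := by
  refine apply_lift_eq_lift_eulerDerivation _ ?_ u
  rintro (_ | p)
  · exact surfaceEuler_surfaceOf w hρ b
  · exact apply_ad_pow_eq_smul (surfaceEuler_surfaceOf w hρ a)
      (surfaceEuler_surfaceOf w hρ p.1.1) p.2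

end SurfaceWeight

section SurfaceSeries

variable {Y : Type*} {w : Y → ℕ}

theorem IsLocallyFinite.surfaceKernelWeight (hw : IsLocallyFinite w) (a b : Y) :
    IsLocallyFinite (surfaceKernelWeight w a b) :=
  (isLocallyFinite_const (hw.pos b)).sumElim
    ((hw.comp_injective Subtype.val_injective).adOrbitWeight (hw.pos a))

theorem fiberSeries_eq_add_otherGenerators (hw : IsLocallyFinite w) {a b : Y} (hab : b ≠ a) :
    fiberSeries w =
      X ^ w a + (X ^ w b + fiberSeries fun j : OtherGenerators a b ↦ w j) := by
  have hne : IsLocallyFinite fun y : {y // y ≠ a} ↦ w y :=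
    hw.comp_injective Subtype.val_injective
  let e : OtherGenerators a b ≃ {y : {y // y ≠ a} // y ≠ ⟨b, hab⟩} :=
    ((Equiv.subtypeSubtypeEquivSubtypeInter (· ≠ a) (· ≠ b)).symm).trans
      (Equiv.subtypeEquivRight fun y ↦ by simp [Subtype.ext_iff])
  rw [fiberSeries_eq_X_pow_add hw a, fiberSeries_eq_X_pow_add hne ⟨b, hab⟩,
    ← fiberSeries_comp_equiv e]
  rfl

theorem fiberSeries_surfaceKernelWeight (hw : IsLocallyFinite w) {a b : Y} (hab : b ≠ a) :
    (1 - X ^ w a) * (1 - fiberSeries (surfaceKernelWeight w a b)) =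
      1 - fiberSeries w + X ^ (w a + w b) := by
  have hother : IsLocallyFinite fun j : OtherGenerators a b ↦ w j :=
    hw.comp_injective Subtype.val_injective
  rw [surfaceKernelWeight, fiberSeries_sumElim (isLocallyFinite_const (hw.pos b))
    (hother.adOrbitWeight (hw.pos a)), fiberSeries_const_of_unique,
    fiberSeries_eq_add_otherGenerators hw hab]
  linear_combination -fiberSeries_adOrbitWeight hother (hw.pos a)

end SurfaceSeries

section SurfaceWitt

variable {K : Type*} [Field K] [CharZero K] {Y : Type*} {a b : Y} {w : Y → ℕ}
  {ρ : FreeLieAlgebra K (OtherGenerators a b)}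
  (hρ : eulerDerivation K (fun j ↦ w j.1) ρ = ((w a + w b : ℕ) : K) • ρ)

theorem finite_weightSpace_surfaceEuler (hab : b ≠ a) (hw : IsLocallyFinite w) (m : ℕ) :
    FiniteDimensional K (weightSpace (surfaceEuler w hρ) m) :=
  have := finite_weightSpace_eulerDerivation (K := K) (hw.surfaceKernelWeight a b)
  finite_weightSpace_of_semidirect _ (semidirectDesc_surfaceKernelHom_bijective ρ hab)
    (surfaceEuler_surfaceOf w hρ a) (surfaceEuler_surfaceKernelHom w hρ) m

theorem eulerDefect_surfaceEuler (hab : b ≠ a) (hw : IsLocallyFinite w) :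
    eulerDefect (weightDim (surfaceEuler w hρ)) (1 - fiberSeries w + X ^ (w a + w b)) = 0 := by
  have hkernel := hw.surfaceKernelWeight a b
  have := finite_weightSpace_eulerDerivation (K := K) hkernel
  rw [weightDim_of_semidirect _ (semidirectDesc_surfaceKernelHom_bijective ρ hab)
      (surfaceEuler_surfaceOf w hρ a) (surfaceEuler_surfaceKernelHom w hρ),
    ← fiberSeries_surfaceKernelWeight hw hab, eulerDefect_single_add (hw.pos a),
    eulerDefect_eulerDerivation hkernel, mul_zero]

end SurfaceWitt

/-! ### Möbius inversion -/

section DimensionFormula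

variable {d : ℕ → ℕ} {u : ℚ⟦X⟧} {k M r : ℕ}

theorem constantCoeff_divisorSeries (d : ℕ → ℕ) : constantCoeff (divisorSeries d) = 0 := by
  simp [divisorSeries, ← coeff_zero_eq_constantCoeff_apply]

theorem cast_eq_sum_moebius_mul_coeff_divisorSeries (d : ℕ → ℕ) (hr : 1 ≤ r) :
    (d r : ℚ) = ∑ ℓ ∈ r.divisors, ((ArithmeticFunction.moebius ℓ : ℚ) / (ℓ : ℚ)) *
      (coeff (r / ℓ) (divisorSeries d) / (r / ℓ : ℕ)) := by
  have hinv : ∑ ℓ ∈ r.divisors,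
      (ArithmeticFunction.moebius ℓ : ℚ) * coeff (r / ℓ) (divisorSeries d) = r * d r := by
    rw [← Nat.sum_divisorsAntidiagonal
      fun ℓ k ↦ (ArithmeticFunction.moebius ℓ : ℚ) * coeff k (divisorSeries d)]
    exact (ArithmeticFunction.sum_eq_iff_sum_mul_moebius_eq (f := fun m ↦ (m : ℚ) * d m)
      (g := fun k ↦ coeff k (divisorSeries d))).1
      (fun k _ ↦ by rw [divisorSeries, coeff_mk]) r hr
  have hr0 : (r : ℚ) ≠ 0 := by positivity
  rw [← mul_div_cancel_left₀ (d r : ℚ) hr0, ← hinv, Finset.sum_div]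
  refine Finset.sum_congr rfl fun ℓ hℓ ↦ ?_
  have hmul : (ℓ : ℚ) * (r / ℓ : ℕ) = r :=
    mod_cast Nat.mul_div_cancel' (Nat.dvd_of_mem_divisors hℓ)
  rw [div_mul_div_comm, hmul]

/-- The partial sum `∑ u ^ j / j`, for `1 ≤ j ≤ M`, of the series of `-log (1 - u)`. -/
noncomputable def logPartialSum (u : ℚ⟦X⟧) (M : ℕ) : ℚ⟦X⟧ :=
  ∑ j ∈ Finset.Icc 1 M, C (j : ℚ)⁻¹ * u ^ j

theorem derivative_logPartialSum (u : ℚ⟦X⟧) (M : ℕ) :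
    derivative ℚ (logPartialSum u M) = (∑ j ∈ Finset.range M, u ^ j) * derivative ℚ u := by
  induction M with
  | zero => simp [logPartialSum]
  | succ M ih =>
    have hterm : derivative ℚ (C ((M + 1 : ℕ) : ℚ)⁻¹ * u ^ (M + 1)) = u ^ M * derivative ℚ u := by
      have hM : ((M + 1 : ℕ) : ℚ) ≠ 0 := by positivity
      rw [← smul_eq_C_mul, Derivation.map_smul, Derivation.leibniz_pow, Nat.add_sub_cancel,
        smul_eq_mul, ← Nat.cast_smul_eq_nsmul ℚ, inv_smul_smul₀ hM]
    rw [logPartialSum, Finset.sum_Icc_succ_top M.succ_pos, ← logPartialSum, map_add, hterm,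
      Finset.sum_range_succ, add_mul, ih]

theorem divisorSeries_mul_one_sub_pow (h : eulerDefect d (1 - u) = 0) (M : ℕ) :
    divisorSeries d * (1 - u ^ M) = X * derivative ℚ (logPartialSum u M) := by
  rw [eulerDefect, map_sub, Derivation.map_one_eq_zero] at h
  rw [derivative_logPartialSum, ← geom_sum_mul_neg]
  linear_combination (∑ j ∈ Finset.range M, u ^ j) * h

theorem coeff_divisorSeries_div (hu : X ∣ u) (h : eulerDefect d (1 - u) = 0) (hk : 1 ≤ k)
    (hkM : k ≤ M) :
    coeff k (divisorSeries d) / k = ∑ j ∈ Finset.Icc 1 M, coeff k (u ^ j) / j := by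
  have htail : coeff k (divisorSeries d * u ^ M) = 0 := by
    have hdvd : X ^ (1 + M) ∣ divisorSeries d * u ^ M := by
      rw [pow_add, pow_one]
      exact mul_dvd_mul (X_dvd_iff.2 (constantCoeff_divisorSeries d)) (pow_dvd_pow_of_dvd hu M)
    exact X_pow_dvd_iff.1 hdvd k (by omega)
  have hcoeff := congrArg (coeff k) (divisorSeries_mul_one_sub_pow h M)
  rw [mul_sub, mul_one, map_sub, htail, sub_zero] at hcoeff
  obtain ⟨k, rfl⟩ := Nat.exists_eq_add_of_le' hk
  rw [coeff_succ_X_mul, coeff_derivative] at hcoeff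
  have hk0 : (k + 1 : ℚ) ≠ 0 := by positivity
  rw [hcoeff, Nat.cast_succ, mul_div_cancel_right₀ _ hk0, logPartialSum, map_sum]
  simp only [coeff_C_mul, div_eq_inv_mul]

theorem coeff_linear_sub_sq_pow (N : ℚ) (j k : ℕ) :
    coeff k ((C N * X - X ^ 2 : ℚ⟦X⟧) ^ j) =
      ∑ pq ∈ Finset.HasAntidiagonal.antidiagonal j with pq.1 + 2 * pq.2 = k,
        (-1) ^ pq.2 * N ^ pq.1 * ((pq.1 + pq.2).choose pq.1 : ℚ) := by
  rw [sub_eq_add_neg, (Commute.all _ _).add_pow', map_sum, Finset.sum_filter]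
  refine Finset.sum_congr rfl fun pq hpq ↦ ?_
  have hmonomial : (C N * X) ^ pq.1 * (-X ^ 2) ^ pq.2 =
      C ((-1) ^ pq.2 * N ^ pq.1) * X ^ (pq.1 + 2 * pq.2) := by
    rw [map_mul, map_pow, map_pow, map_neg, map_one]
    ring
  rw [hmonomial, map_nsmul, coeff_C_mul, coeff_X_pow, Finset.HasAntidiagonal.mem_antidiagonal.1 hpq]
  simp only [eq_comm (a := k), mul_ite, mul_one, mul_zero, smul_ite, smul_zero, nsmul_eq_mul,
    mul_comm (j.choose _ : ℚ)]

theorem sum_coeff_linear_sub_sq_pow_div (N : ℚ) (hkM : k ≤ M) :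
    ∑ j ∈ Finset.Icc 1 M, coeff k ((C N * X - X ^ 2 : ℚ⟦X⟧) ^ j) / j =
      ∑ pq ∈ (Finset.range (M + 1) ×ˢ Finset.range (M + 1)).filter
          (fun pq ↦ pq.1 + 2 * pq.2 = k ∧ 1 ≤ pq.1 + pq.2),
        (-1 : ℚ) ^ pq.2 * N ^ pq.1 * ((pq.1 + pq.2).choose pq.1 : ℚ) / (pq.1 + pq.2 : ℚ) := by
  have hmaps : ∀ pq ∈ (Finset.range (M + 1) ×ˢ Finset.range (M + 1)).filter
      (fun pq ↦ pq.1 + 2 * pq.2 = k ∧ 1 ≤ pq.1 + pq.2), pq.1 + pq.2 ∈ Finset.Icc 1 M := by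
    intro pq hpq
    have := (Finset.mem_filter.1 hpq).2
    exact Finset.mem_Icc.2 (by omega)
  rw [← Finset.sum_fiberwise_of_maps_to hmaps]
  refine Finset.sum_congr rfl fun j hj ↦ ?_
  rw [coeff_linear_sub_sq_pow, Finset.sum_div]
  refine Finset.sum_congr ?_ fun pq hpq ↦ ?_
  · ext pq
    simp only [Finset.mem_filter, Finset.HasAntidiagonal.mem_antidiagonal, Finset.mem_product,
      Finset.mem_range, Finset.mem_Icc] at hj ⊢
    omega
  · have hj : pq.1 + pq.2 = j := by simp_all
    rw [← hj, Nat.cast_add]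

theorem cast_eq_sum_moebius_of_eulerDefect_eq_zero {N : ℚ}
    (h : eulerDefect d (1 - C N * X + X ^ 2) = 0) (hr : 1 ≤ r) :
    (d r : ℚ) = ∑ ℓ ∈ r.divisors, ((ArithmeticFunction.moebius ℓ : ℚ) / (ℓ : ℚ)) *
      ∑ pq ∈ (Finset.range (r + 1) ×ˢ Finset.range (r + 1)).filter
          (fun pq ↦ pq.1 + 2 * pq.2 = r / ℓ ∧ 1 ≤ pq.1 + pq.2),
        (-1 : ℚ) ^ pq.2 * N ^ pq.1 * ((pq.1 + pq.2).choose pq.1 : ℚ) / (pq.1 + pq.2 : ℚ) := by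
  have hdvd : (X : ℚ⟦X⟧) ∣ C N * X - X ^ 2 := ⟨C N - X, by ring⟩
  rw [sub_add] at h
  rw [cast_eq_sum_moebius_mul_coeff_divisorSeries d hr]
  refine Finset.sum_congr rfl fun ℓ hℓ ↦ ?_
  have hpos : 1 ≤ r / ℓ := Nat.div_pos (Nat.divisor_le hℓ) (Nat.pos_of_mem_divisors hℓ)
  have hle : r / ℓ ≤ r := Nat.div_le_self r ℓ
  rw [coeff_divisorSeries_div hdvd h hpos hle, sum_coeff_linear_sub_sq_pow_div N hle]

end DimensionFormula

/-! ### The symplectic relation -/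

theorem fiberSeries_one {Y : Type*} [Finite Y] :
    fiberSeries (fun _ : Y ↦ 1) = C (Nat.card Y : ℚ) * X := by
  ext m
  rw [coeff_C_mul, coeff_X]
  by_cases hm : m = 1 <;> simp [fiberSeries, hm, eq_comm (a := 1)]

/-- The generators other than `x_1` and `x_{g+1}`, for `g = n + 1`. -/
abbrev SympTailGenerators (n : ℕ) := OtherGenerators (0 : Fin (2 * (n + 1))) ⟨n + 1, by omega⟩

/-- The part `∑ ⁅x_i, x_{g+i}⁆`, for `2 ≤ i ≤ g = n + 1`, of the symplectic relation. -/
noncomputable def sympTail (n : ℕ) : FreeLieAlgebra ℚ (SympTailGenerators n) :=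
  ∑ i : Fin n,
    ⁅FreeLieAlgebra.of ℚ
        (⟨⟨i.1 + 1, by omega⟩, by grind⟩ : SympTailGenerators n),
      FreeLieAlgebra.of ℚ
        (⟨⟨n + 1 + (i.1 + 1), by omega⟩, by simp [Fin.ext_iff]⟩ : SympTailGenerators n)⁆

theorem eulerDerivation_sympTail (n : ℕ) :
    eulerDerivation ℚ (fun _ ↦ 1) (sympTail n) = (2 : ℚ) • sympTail n := by
  simp only [sympTail, map_sum, Finset.smul_sum, LieDerivation.apply_lie_eq_add,
    eulerDerivation_of, Nat.cast_one, one_smul, two_smul]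

theorem sympRelation_succ (n : ℕ) :
    sympRelation (n + 1) = surfaceRelation 0 ⟨n + 1, by omega⟩ (sympTail n) := by
  simp only [sympRelation, Fin.sum_univ_succ, surfaceRelation, sympTail, map_sum, LieHom.map_lie,
    FreeLieAlgebra.lift_of_apply]
  rfl

end OneRelatorLie

open OneRelatorLie in
theorem dimension_formula_symp_lie_algebra_general {K : Type*} [Field K] [CharZero K] {Y : Type*}
    [Finite Y] {a b : Y} (hab : b ≠ a) {ρ : FreeLieAlgebra K (OtherGenerators a b)}
    (hρ : eulerDerivation K (fun _ ↦ 1) ρ = (2 : K) • ρ) (r : ℕ) :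
    FiniteDimensional K (LowerCentralQuotient K (SurfaceLieAlgebra a b ρ) r) ∧
    (Module.finrank K (LowerCentralQuotient K (SurfaceLieAlgebra a b ρ) r) : ℚ) =
      ∑ ℓ ∈ (r + 1).divisors, ((ArithmeticFunction.moebius ℓ : ℚ) / (ℓ : ℚ)) *
        ∑ pq ∈ (Finset.range (r + 2) ×ˢ Finset.range (r + 2)).filter
            (fun pq ↦ pq.1 + 2 * pq.2 = (r + 1) / ℓ ∧ 1 ≤ pq.1 + pq.2),
          (-1 : ℚ) ^ pq.2 * (Nat.card Y : ℚ) ^ pq.1 * ((pq.1 + pq.2).choose pq.1 : ℚ) /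
            (pq.1 + pq.2 : ℚ) := by
  have hw : IsLocallyFinite fun _ : Y ↦ 1 := isLocallyFinite_const le_rfl
  have hρ' : eulerDerivation K (fun _ ↦ 1) ρ = ((1 + 1 : ℕ) : K) • ρ := by
    rw [hρ, Nat.cast_add, Nat.cast_one, one_add_one_eq_two]
  have hE (y : Y) : surfaceEuler (fun _ ↦ 1) hρ' (surfaceOf ρ y) = surfaceOf ρ y := by
    rw [surfaceEuler_surfaceOf (fun _ ↦ 1), Nat.cast_one, one_smul]
  let e : LowerCentralQuotient K (SurfaceLieAlgebra a b ρ) r ≃ₗ[K]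
      weightSpace (surfaceEuler (fun _ ↦ 1) hρ') (r + 1) :=
    lowerCentralQuotientEquiv (lieSpan_range_surfaceOf_eq_top ρ) (Set.forall_mem_range.2 hE) r
  have := finite_weightSpace_surfaceEuler (w := fun _ ↦ 1) hρ' hab hw (r + 1)
  have hdefect := eulerDefect_surfaceEuler (w := fun _ ↦ 1) hρ' hab hw
  rw [fiberSeries_one] at hdefect
  refine ⟨Module.Finite.equiv e.symm, ?_⟩
  rw [e.finrank_eq]
  exact cast_eq_sum_moebius_of_eulerDefect_eq_zero hdefect r.succ_pos

/-- For `g ≥ 1`, `n = 2g` and every `r ≥ 1`, the quotient `γ_r L_g / γ_{r+1} L_g` of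
consecutive terms of the lower central series of `L_g` is a finite-dimensional `ℚ`-vector
space of dimension
`ε_r = ∑_{ℓ ∣ r} (μ(ℓ)/ℓ) · ∑_{p+2q = r/ℓ, p+q ≥ 1} (−1)^q n^p C(p+q,p)/(p+q)`. -/
theorem dimension_formula_symp_lie_algebra (g : ℕ) (hg : 1 ≤ g) (r : ℕ) (hr : 1 ≤ r) :
    FiniteDimensional ℚ (lcsQuotient (SympLieAlgebra g) r) ∧
    (Module.finrank ℚ (lcsQuotient (SympLieAlgebra g) r) : ℚ) =
      ∑ ℓ ∈ r.divisors,
        ((ArithmeticFunction.moebius ℓ : ℚ) / (ℓ : ℚ)) *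
          ∑ pq ∈ (Finset.range (r + 1) ×ˢ Finset.range (r + 1)).filter
              (fun pq => pq.1 + 2 * pq.2 = r / ℓ ∧ 1 ≤ pq.1 + pq.2),
            (-1 : ℚ) ^ pq.2 * (2 * g : ℚ) ^ pq.1 *
              (Nat.choose (pq.1 + pq.2) pq.1 : ℚ) / (pq.1 + pq.2 : ℚ) := by
  obtain ⟨n, rfl⟩ := Nat.exists_eq_add_of_le' hg
  obtain ⟨s, rfl⟩ := Nat.exists_eq_add_of_le' hr
  unfold SympLieAlgebra sympIdeal
  rw [OneRelatorLie.sympRelation_succ]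
  have h := dimension_formula_symp_lie_algebra_general (by simp [Fin.ext_iff])
    (OneRelatorLie.eulerDerivation_sympTail n) s
  rwa [Nat.card_fin, Nat.cast_mul, Nat.cast_ofNat] at h
end

section
/- Let g ≥ 1 and for r ≥ 1 let ε_r = dim_ℚ(γ_r L_g / γ_{r+1} L_g). Then for every R ≥ 1 the polynomial/power-series congruence ∏_{r=1}^{R} (1 − z^r)^{ε_r} ≡ 1 − 2g·z + z² (mod z^{R+1}) holds; equivalently, for every m with 1 ≤ m ≤ R, the coefficient of z^m in ∏_{r=1}^{R} (1 − z^r)^{ε_r} equals the coefficient of z^m in 1 − 2g·z + z². -/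
namespace LieElimination

section Derivation

variable {R L M : Type*} [CommRing R] [LieRing L] [LieAlgebra R L]

theorem lieSpan_range_of_eq_top (ι : Type*) :
    LieSubalgebra.lieSpan R (FreeLieAlgebra R ι) (Set.range (FreeLieAlgebra.of R)) = ⊤ := by
  set S := LieSubalgebra.lieSpan R (FreeLieAlgebra R ι) (Set.range (FreeLieAlgebra.of R))
  let toSpan : FreeLieAlgebra R ι →ₗ⁅R⁆ S := FreeLieAlgebra.lift R fun x ↦
    ⟨FreeLieAlgebra.of R x, LieSubalgebra.subset_lieSpan ⟨x, rfl⟩⟩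
  have incl_comp : S.incl.comp toSpan = LieHom.id :=
    FreeLieAlgebra.hom_ext fun x ↦ by simp [toSpan]
  refine eq_top_iff.2 fun a _ ↦ ?_
  rw [← LieHom.id_apply (R := R) a, ← incl_comp]
  exact (toSpan a).2

section FreeDerivation

variable {ι : Type*} [AddCommGroup M] [Module R M] [LieRingModule (FreeLieAlgebra R ι) M]
  [LieModule R (FreeLieAlgebra R ι) M]

open LieAlgebra in
theorem exists_lieDerivation_apply_of (f : ι → M) :
    ∃ D : LieDerivation R (FreeLieAlgebra R ι) M, ∀ x, D (FreeLieAlgebra.of R x) = f x := by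
  let c : LieModule.Cohomology.twoCocycle R (FreeLieAlgebra R ι) M := 0
  let graph : FreeLieAlgebra R ι →ₗ⁅R⁆ ofTwoCocycle c :=
    FreeLieAlgebra.lift R fun x ↦ ofProd c (FreeLieAlgebra.of R x, f x)
  let fstHom : ofTwoCocycle c →ₗ⁅R⁆ FreeLieAlgebra R ι :=
    { toFun a := a.carrier.1
      map_add' _ _ := rfl
      map_smul' _ _ := rfl
      map_lie' := by intros; rw [bracket_ofTwoCocycle]; rfl }
  have graph_fst (a) : (graph a).carrier.1 = a := by
    have : fstHom.comp graph = LieHom.id := FreeLieAlgebra.hom_ext fun x ↦ by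
      simp [graph, fstHom]; rfl
    exact LieHom.congr_fun this a
  refine ⟨{ toFun a := (graph a).carrier.2
            map_add' a b := by rw [map_add]; rfl
            map_smul' t a := by rw [map_smul]; rfl
            leibniz' a b := ?_ }, fun x ↦ ?_⟩
  · change (graph ⁅a, b⁆).carrier.2 = ⁅a, (graph b).carrier.2⁆ - ⁅b, (graph a).carrier.2⁆
    rw [LieHom.map_lie, bracket_ofTwoCocycle]
    simp [ofProd, graph_fst, c]
  · change (graph (FreeLieAlgebra.of R x)).carrier.2 = f x
    simp only [graph, FreeLieAlgebra.lift_of_apply]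
    rfl

/-- The derivation of a free Lie algebra into a module with prescribed values on the generators. -/
noncomputable def freeDerivation (f : ι → M) : LieDerivation R (FreeLieAlgebra R ι) M :=
  (exists_lieDerivation_apply_of f).choose

@[simp]
theorem freeDerivation_of (f : ι → M) (x : ι) :
    freeDerivation f (FreeLieAlgebra.of R x) = f x :=
  (exists_lieDerivation_apply_of f).choose_spec x

end FreeDerivation

/-- The derivation of a free Lie algebra multiplying the generator `x` by `w x`. Its eigenspaces are
the homogeneous parts for the grading that gives `x` degree `w x`. -/
noncomputable def weightDerivation (R : Type*) [CommRing R] {ι : Type*} (w : ι → ℕ) :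
    LieDerivation R (FreeLieAlgebra R ι) (FreeLieAlgebra R ι) :=
  freeDerivation fun x ↦ (w x : R) • FreeLieAlgebra.of R x

@[simp]
theorem weightDerivation_of {ι : Type*} (w : ι → ℕ) (x : ι) :
    weightDerivation R w (FreeLieAlgebra.of R x) = (w x : R) • FreeLieAlgebra.of R x :=
  freeDerivation_of _ x

variable [LieRing M] [LieAlgebra R M]

theorem derivation_map_eq_map_derivation {D : LieDerivation R L L} {E : LieDerivation R M M}
    {φ : L →ₗ⁅R⁆ M} {S : Set L} (hS : LieSubalgebra.lieSpan R L S = ⊤)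
    (h : ∀ a ∈ S, E (φ a) = φ (D a)) (a : L) : E (φ a) = φ (D a) := by
  have ha : a ∈ LieSubalgebra.lieSpan R L S := hS ▸ LieSubalgebra.mem_top a
  induction ha using LieSubalgebra.lieSpan_induction with
  | mem a ha => exact h a ha
  | zero => simp
  | add a b _ _ ha hb => simp only [map_add, ha, hb]
  | smul t a _ ha => simp only [map_smul, ha]
  | lie a b _ _ ha hb =>
    simp only [LieHom.map_lie, LieDerivation.apply_lie_eq_add, map_add, ha, hb]

theorem derivation_map_of_eq {ι : Type*}
    {D : LieDerivation R (FreeLieAlgebra R ι) (FreeLieAlgebra R ι)}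
    {E : LieDerivation R M M} {φ : FreeLieAlgebra R ι →ₗ⁅R⁆ M}
    (h : ∀ x, E (φ (FreeLieAlgebra.of R x)) = φ (D (FreeLieAlgebra.of R x))) (a) :
    E (φ a) = φ (D a) :=
  derivation_map_eq_map_derivation (lieSpan_range_of_eq_top ι) (Set.forall_mem_range.2 h) a

theorem lieSpan_image_eq_top {φ : L →ₗ⁅R⁆ M} (hφ : Function.Surjective φ) {S : Set L}
    (hS : LieSubalgebra.lieSpan R L S = ⊤) : LieSubalgebra.lieSpan R M (φ '' S) = ⊤ := by
  rw [← LieSubalgebra.map_lieSpan, hS, ← LieHom.range_eq_map, LieHom.range_eq_top]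
  exact hφ

end Derivation

section Quotient

variable {R L M : Type*} [CommRing R] [LieRing L] [LieAlgebra R L] [LieRing M] [LieAlgebra R M]

/-- The quotient map of a Lie algebra by a Lie ideal, as a homomorphism of Lie algebras. -/
def quotientMk (I : LieIdeal R L) : L →ₗ⁅R⁆ L ⧸ I :=
  { I.toSubmodule.mkQ with map_lie' := fun {a b} ↦ LieSubmodule.Quotient.mk_bracket (I := I) a b }

theorem quotientMk_surjective (I : LieIdeal R L) : Function.Surjective (quotientMk I) :=
  I.toSubmodule.mkQ_surjective

theorem quotientMk_eq_zero {I : LieIdeal R L} {a : L} : quotientMk I a = 0 ↔ a ∈ I :=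
  LieSubmodule.Quotient.mk_eq_zero I

/-- The homomorphism from a quotient Lie algebra induced by one that kills the ideal. -/
def quotientLift (I : LieIdeal R L) (f : L →ₗ⁅R⁆ M) (h : I ≤ f.ker) : L ⧸ I →ₗ⁅R⁆ M :=
  { I.toSubmodule.liftQ (f : L →ₗ[R] M) (fun _ ha ↦ f.mem_ker.1 (h ha)) with
    map_lie' := by
      intro a b
      obtain ⟨a, rfl⟩ := quotientMk_surjective I a
      obtain ⟨b, rfl⟩ := quotientMk_surjective I b
      exact f.map_lie a b }

/-- The derivation of a quotient Lie algebra induced by one that preserves the ideal. -/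
def quotientDerivation (I : LieIdeal R L) (D : LieDerivation R L L) (h : ∀ a ∈ I, D a ∈ I) :
    LieDerivation R (L ⧸ I) (L ⧸ I) where
  toLinearMap := I.toSubmodule.mapQ I.toSubmodule D.toLinearMap h
  leibniz' a b := by
    obtain ⟨a, rfl⟩ := quotientMk_surjective I a
    obtain ⟨b, rfl⟩ := quotientMk_surjective I b
    exact congrArg (quotientMk I) (D.leibniz' a b)

@[simp]
theorem quotientDerivation_mk {I : LieIdeal R L} {D : LieDerivation R L L}
    (h : ∀ a ∈ I, D a ∈ I) (a : L) :
    quotientDerivation I D h (quotientMk I a) = quotientMk I (D a) :=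
  rfl

theorem derivation_mem_lieSpan {D : LieDerivation R L L} {s : Set L}
    (h : ∀ a ∈ s, D a ∈ LieSubmodule.lieSpan R L s) {a : L}
    (ha : a ∈ LieSubmodule.lieSpan R L s) : D a ∈ LieSubmodule.lieSpan R L s := by
  induction ha using LieSubmodule.lieSpan_induction with
  | mem a ha => exact h a ha
  | zero => simp
  | add a b _ _ ha hb => rw [map_add]; exact add_mem ha hb
  | smul t a _ ha => rw [map_smul]; exact SMulMemClass.smul_mem t ha
  | lie x a ha hDa =>
    rw [LieDerivation.apply_lie_eq_add]
    exact add_mem (LieSubmodule.lie_mem _ hDa) (LieSubmodule.lie_mem _ ha)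

end Quotient

section Degree

variable {K V L : Type*} [CommRing K] [AddCommGroup V] [Module K V] [LieRing L] [LieAlgebra K L]

/-- The homogeneous part of degree `n` of a grading encoded by its Euler operator `E`, the
endomorphism multiplying the elements of degree `n` by `n`. -/
def degreePart (E : Module.End K V) (n : ℕ) : Submodule K V :=
  E.eigenspace (n : K)

/-- The sum of the homogeneous parts of degree at least `N`. -/
def degreeGE (E : Module.End K V) (N : ℕ) : Submodule K V :=
  ⨆ n : Set.Ici N, degreePart E n

theorem mem_degreePart {E : Module.End K V} {n : ℕ} {a : V} :
    a ∈ degreePart E n ↔ E a = (n : K) • a :=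
  Module.End.mem_eigenspace_iff

theorem degreePart_le_degreeGE (E : Module.End K V) {N n : ℕ} (h : N ≤ n) :
    degreePart E n ≤ degreeGE E N :=
  le_iSup (fun n : Set.Ici N ↦ degreePart E n) ⟨n, h⟩

theorem degreeGE_antitone (E : Module.End K V) : Antitone (degreeGE E) := fun _ _ h ↦
  iSup_le fun n ↦ degreePart_le_degreeGE E (h.trans n.2)

theorem degreeGE_eq_sup (E : Module.End K V) (N : ℕ) :
    degreeGE E N = degreePart E N ⊔ degreeGE E (N + 1) := by
  refine le_antisymm (iSup_le fun ⟨n, hn⟩ ↦ ?_)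
    (sup_le (degreePart_le_degreeGE E le_rfl) (degreeGE_antitone E N.le_succ))
  obtain rfl | hn := (Set.mem_Ici.1 hn).eq_or_lt
  · exact le_sup_left
  · exact (degreePart_le_degreeGE E hn).trans le_sup_right

theorem disjoint_degreePart_degreeGE {K V : Type*} [Field K] [CharZero K] [AddCommGroup V]
    [Module K V] (E : Module.End K V) {n N : ℕ} (h : n < N) :
    Disjoint (degreePart E n) (degreeGE E N) := by
  refine ((Module.End.eigenspaces_iSupIndep E) (n : K)).mono_right (iSup_le fun m ↦ ?_)
  have : ((m : ℕ) : K) ≠ n := Nat.cast_injective.ne (h.trans_le m.2).ne'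
  exact le_iSup₂_of_le (m : K) this le_rfl

variable {E : LieDerivation K L L}

theorem lie_mem_degreePart {m n : ℕ} {a b : L} (ha : a ∈ degreePart E.toLinearMap m)
    (hb : b ∈ degreePart E.toLinearMap n) : ⁅a, b⁆ ∈ degreePart E.toLinearMap (m + n) := by
  rw [mem_degreePart, LieDerivation.coeFn_coe] at *
  rw [LieDerivation.apply_lie_eq_add, ha, hb, lie_smul, smul_lie, ← add_smul, add_comm,
    Nat.cast_add]

theorem lie_mem_degreeGE {M N : ℕ} {a b : L} (ha : a ∈ degreeGE E.toLinearMap M)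
    (hb : b ∈ degreeGE E.toLinearMap N) : ⁅a, b⁆ ∈ degreeGE E.toLinearMap (M + N) := by
  induction ha using Submodule.iSup_induction' with
  | mem m a ha =>
    induction hb using Submodule.iSup_induction' with
    | mem n b hb =>
      exact degreePart_le_degreeGE _ (add_le_add m.2 n.2) (lie_mem_degreePart ha hb)
    | zero => simp
    | add b c _ _ hb hc => rw [lie_add]; exact add_mem hb hc
  | zero => simp
  | add a c _ _ ha hc => rw [add_lie]; exact add_mem ha hc

theorem degreeGE_eq_top {S : Set L} (hS : LieSubalgebra.lieSpan K L S = ⊤) {N : ℕ}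
    (h : S ⊆ degreeGE E.toLinearMap N) : degreeGE E.toLinearMap N = ⊤ := by
  refine eq_top_iff.2 fun a _ ↦ ?_
  have ha : a ∈ LieSubalgebra.lieSpan K L S := hS ▸ LieSubalgebra.mem_top a
  induction ha using LieSubalgebra.lieSpan_induction with
  | mem a ha => exact h ha
  | zero => exact zero_mem _
  | add a b _ _ ha hb => exact add_mem (ha trivial) (hb trivial)
  | smul t a _ ha => exact Submodule.smul_mem _ t (ha trivial)
  | lie a b _ _ ha hb =>
    exact degreeGE_antitone _ (Nat.le_add_left N N) (lie_mem_degreeGE (ha trivial) (hb trivial))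

end Degree

section LowerCentralSeries

open LieModule

variable {K L : Type*} [CommRing K] [LieRing L] [LieAlgebra K L]

theorem lowerCentralSeries_succ_le {n : ℕ} {P : Submodule K L}
    (h : ∀ x : L, ∀ b ∈ lowerCentralSeries K L L n, ⁅x, b⁆ ∈ P) :
    (lowerCentralSeries K L L (n + 1)).toSubmodule ≤ P := by
  rw [lowerCentralSeries_succ, LieSubmodule.lieIdeal_oper_eq_linear_span', Submodule.span_le]
  rintro _ ⟨x, -, b, hb, rfl⟩
  exact h x b hb

theorem lie_mem_lowerCentralSeries_succ (x : L) {n : ℕ} {b : L}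
    (hb : b ∈ lowerCentralSeries K L L n) : ⁅x, b⁆ ∈ lowerCentralSeries K L L (n + 1) := by
  rw [lowerCentralSeries_succ]
  exact LieSubmodule.lie_mem_lie (LieSubmodule.mem_top x) hb

theorem lie_mem_lowerCentralSeries_add_two {n : ℕ} {a b : L}
    (ha : a ∈ lowerCentralSeries K L L 1) (hb : b ∈ lowerCentralSeries K L L n) :
    ⁅a, b⁆ ∈ lowerCentralSeries K L L (n + 2) := by
  let lieRight : L →ₗ[K] L := (toEnd K L L : L →ₗ[K] Module.End K L).flip b
  refine lowerCentralSeries_succ_le (n := 0)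
    (P := (lowerCentralSeries K L L (n + 2)).toSubmodule.comap lieRight) (fun x y _ ↦ ?_) ha
  change ⁅⁅x, y⁆, b⁆ ∈ lowerCentralSeries K L L (n + 2)
  rw [lie_lie]
  exact sub_mem (lie_mem_lowerCentralSeries_succ x (lie_mem_lowerCentralSeries_succ y hb))
    (lie_mem_lowerCentralSeries_succ y (lie_mem_lowerCentralSeries_succ x hb))

variable {S : Set L} {E : LieDerivation K L L}

theorem derivation_sub_self_mem_lowerCentralSeries_one (hS : LieSubalgebra.lieSpan K L S = ⊤)
    (hE : ∀ x ∈ S, E x = x) (a : L) : E a - a ∈ lowerCentralSeries K L L 1 := by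
  have lie_mem (a b : L) : ⁅a, b⁆ ∈ lowerCentralSeries K L L 1 :=
    lie_mem_lowerCentralSeries_succ a (LieSubmodule.mem_top b)
  have ha : a ∈ LieSubalgebra.lieSpan K L S := hS ▸ LieSubalgebra.mem_top a
  induction ha using LieSubalgebra.lieSpan_induction with
  | mem a ha => simp [hE a ha]
  | zero => simp
  | add a b _ _ ha hb => simpa only [map_add, add_sub_add_comm] using add_mem ha hb
  | smul t a _ ha => simpa only [map_smul, smul_sub] using SMulMemClass.smul_mem t ha
  | lie a b _ _ _ _ =>
    rw [LieDerivation.apply_lie_eq_add]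
    exact sub_mem (add_mem (lie_mem _ _) (lie_mem _ _)) (lie_mem _ _)

theorem derivation_sub_smul_mem_lowerCentralSeries (hS : LieSubalgebra.lieSpan K L S = ⊤)
    (hE : ∀ x ∈ S, E x = x) (n : ℕ) {a : L} (ha : a ∈ lowerCentralSeries K L L n) :
    E a - ((n + 1 : ℕ) : K) • a ∈ lowerCentralSeries K L L (n + 1) := by
  induction n generalizing a with
  | zero => simpa using derivation_sub_self_mem_lowerCentralSeries_one hS hE a
  | succ n ih =>
    refine lowerCentralSeries_succ_le (P := (lowerCentralSeries K L L (n + 2)).toSubmodule.comap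
      (E.toLinearMap - ((n + 2 : ℕ) : K) • LinearMap.id)) (fun x b hb ↦ ?_) ha
    have split : E ⁅x, b⁆ - ((n + 2 : ℕ) : K) • ⁅x, b⁆ =
        ⁅x, E b - ((n + 1 : ℕ) : K) • b⁆ + ⁅E x - x, b⁆ := by
      rw [LieDerivation.apply_lie_eq_add, lie_sub, sub_lie, lie_smul]
      push_cast
      module
    change E ⁅x, b⁆ - ((n + 2 : ℕ) : K) • ⁅x, b⁆ ∈ lowerCentralSeries K L L (n + 2)
    rw [split]
    exact add_mem (lie_mem_lowerCentralSeries_succ x (ih hb))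
      (lie_mem_lowerCentralSeries_add_two
        (derivation_sub_self_mem_lowerCentralSeries_one hS hE x) hb)

end LowerCentralSeries

section HomogeneousGenerators

open LieModule

variable {K L : Type*} [Field K] [CharZero K] [LieRing L] [LieAlgebra K L] {S : Set L}
  {E : LieDerivation K L L}

theorem degreePart_le_lowerCentralSeries (hS : LieSubalgebra.lieSpan K L S = ⊤)
    (hE : ∀ x ∈ S, E x = x) {m n : ℕ} (h : n < m) :
    degreePart E.toLinearMap m ≤ (lowerCentralSeries K L L n).toSubmodule := by
  intro a ha
  induction n with
  | zero => exact LieSubmodule.mem_top a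
  | succ n ih =>
    have mem := derivation_sub_smul_mem_lowerCentralSeries hS hE n (ih (by lia))
    have hc : (m : K) - ((n + 1 : ℕ) : K) ≠ 0 := sub_ne_zero.2 (Nat.cast_injective.ne h.ne')
    rw [mem_degreePart, LieDerivation.coeFn_coe] at ha
    rw [ha, ← sub_smul] at mem
    exact (Submodule.smul_mem_iff _ hc).1 mem

theorem lowerCentralSeries_eq_degreeGE (hS : LieSubalgebra.lieSpan K L S = ⊤)
    (hE : ∀ x ∈ S, E x = x) (n : ℕ) :
    (lowerCentralSeries K L L n).toSubmodule = degreeGE E.toLinearMap (n + 1) := by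
  have degreeGE_one : degreeGE E.toLinearMap 1 = ⊤ := degreeGE_eq_top hS fun x hx ↦
    degreePart_le_degreeGE _ le_rfl (mem_degreePart.2 (by simp [hE x hx]))
  refine le_antisymm ?_ (iSup_le fun m ↦ degreePart_le_lowerCentralSeries hS hE m.2)
  induction n with
  | zero => exact degreeGE_one ▸ le_top
  | succ n ih =>
    refine lowerCentralSeries_succ_le fun x b hb ↦ ?_
    rw [add_comm (n + 1)]
    exact lie_mem_degreeGE (degreeGE_one ▸ Submodule.mem_top) (ih hb)

theorem finrank_quotient_of_eq_sup {K V : Type*} [CommRing K] [AddCommGroup V] [Module K V]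
    {P A Q : Submodule K V} (h : P = A ⊔ Q) (disj : Disjoint A Q) :
    Module.finrank K (P ⧸ Q.comap P.subtype) = Module.finrank K A := by
  subst h
  rw [← (LinearMap.quotientInfEquivSupQuotient A Q).finrank_eq]
  have inf_eq_bot : A.comap A.subtype ⊓ Q.comap A.subtype = ⊥ := by
    rw [Submodule.comap_subtype_self, top_inf_eq, Submodule.disjoint_iff_comap_eq_bot.1 disj]
  exact (Submodule.quotEquivOfEqBot _ inf_eq_bot).finrank_eq

theorem finrank_lcsQuotient {L : Type*} [LieRing L] [LieAlgebra ℚ L] {S : Set L}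
    {E : LieDerivation ℚ L L} (hS : LieSubalgebra.lieSpan ℚ L S = ⊤) (hE : ∀ x ∈ S, E x = x)
    {r : ℕ} (hr : 1 ≤ r) :
    Module.finrank ℚ (lcsQuotient L r) = Module.finrank ℚ (degreePart E.toLinearMap r) := by
  have lcs_eq := lowerCentralSeries_eq_degreeGE hS hE
  refine finrank_quotient_of_eq_sup ?_ ?_
  · rw [lcs_eq, lcs_eq, Nat.sub_add_cancel hr, degreeGE_eq_sup]
  · rw [lcs_eq]
    exact disjoint_degreePart_degreeGE _ r.lt_succ_self

end HomogeneousGenerators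

section Elimination

attribute [local instance] LieRing.ofAssociativeRing

open LieAlgebra FreeLieAlgebra

variable {R F M : Type*} [CommRing R] [LieRing F] [LieAlgebra R F] [LieRing M] [LieAlgebra R M]

/-- The action of the one-dimensional abelian Lie algebra `R` on `F` in which `1` acts as the
derivation `D`. The associated semidirect sum adjoins to `F` an element whose bracket is `D`. -/
def derivationAction (D : LieDerivation R F F) : R →ₗ⁅R⁆ LieDerivation R F F :=
  { LinearMap.toSpanSingleton R _ D with
    map_lie' := fun {s t} ↦ by ext a; simp [LieRing.of_associative_ring_bracket, mul_comm] }

@[simp]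
theorem derivationAction_apply (D : LieDerivation R F F) (t : R) : derivationAction D t = t • D :=
  rfl

theorem right_one_lie_left (D : LieDerivation R F F) (a : F) :
    ⁅(⟨0, 1⟩ : F ⋊⁅derivationAction D⁆ R), (⟨a, 0⟩ : F ⋊⁅derivationAction D⁆ R)⁆ = ⟨D a, 0⟩ := by
  rw [SemiDirectSum.lie_eq_mk]
  simp

theorem bijective_coprod_toSpanSingleton {D : LieDerivation R F F} {φ : F →ₗ⁅R⁆ M} {u : M}
    (hφ : ∀ a, ⁅u, φ a⁆ = φ (D a)) (hgen : LieSubalgebra.lieSpan R M (insert u (Set.range φ)) = ⊤)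
    {f : M →ₗ⁅R⁆ F ⋊⁅derivationAction D⁆ R} (hfφ : ∀ a, f (φ a) = ⟨a, 0⟩) (hfu : f u = ⟨0, 1⟩) :
    Function.Bijective ((φ : F →ₗ[R] M).coprod (LinearMap.toSpanSingleton R M u)) := by
  set e := (φ : F →ₗ[R] M).coprod (LinearMap.toSpanSingleton R M u)
  have e_apply (p : F × R) : e p = φ p.1 + p.2 • u := rfl
  constructor
  · refine Function.LeftInverse.injective (g := SemiDirectSum.toProd ∘ f) fun p ↦ ?_
    simp [e_apply, hfφ, hfu]
  · have lie_mem {x y : M} (hx : x ∈ e.range) (hy : y ∈ e.range) : ⁅x, y⁆ ∈ e.range := by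
      obtain ⟨⟨a, s⟩, rfl⟩ := hx
      obtain ⟨⟨b, t⟩, rfl⟩ := hy
      refine ⟨(⁅a, b⁆ + s • D b - t • D a, 0), ?_⟩
      simp only [e_apply, map_sub, map_add, LieHom.map_lie, map_smul, zero_smul, add_zero, add_lie,
        lie_add, smul_lie, lie_smul, lie_self, smul_zero, hφ, ← lie_skew (φ a) u, smul_neg]
      abel
    let rangeSubalgebra : LieSubalgebra R M := { e.range with lie_mem' := lie_mem }
    have le_range : LieSubalgebra.lieSpan R M (insert u (Set.range φ)) ≤ rangeSubalgebra := by
      refine LieSubalgebra.lieSpan_le.2 (Set.insert_subset ⟨(0, 1), by simp [e_apply]⟩ ?_)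
      rintro _ ⟨a, rfl⟩
      exact ⟨(a, 0), by simp [e_apply]⟩
    exact fun x ↦ le_range (hgen ▸ LieSubalgebra.mem_top x)

variable {Y Z : Type*}

/-- The action of an eliminated generator `u` on the remaining ones: `(k, y)` stands for
`(ad u)ᵏ y` and goes to `(k + 1, y)`, while the bracket of `u` with `z : Z` is given by `r z`. -/
noncomputable def shiftDerivation (r : Z → FreeLieAlgebra R (Z ⊕ ℕ × Y)) :
    LieDerivation R (FreeLieAlgebra R (Z ⊕ ℕ × Y)) (FreeLieAlgebra R (Z ⊕ ℕ × Y)) :=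
  freeDerivation (Sum.elim r fun p ↦ of R (.inr (p.1 + 1, p.2)))

/-- Evaluation of the generators left after eliminating `u`: `z : Z` goes to `a z` and `(k, y)` to
`(ad u)ᵏ (b y)`. -/
noncomputable def elimHom (u : M) (a : Z → M) (b : Y → M) :
    FreeLieAlgebra R (Z ⊕ ℕ × Y) →ₗ⁅R⁆ M :=
  lift R (Sum.elim a fun p ↦ (ad R M u ^ p.1) (b p.2))

variable {u : M} {a : Z → M} {b : Y → M} {r : Z → FreeLieAlgebra R (Z ⊕ ℕ × Y)}

@[simp]
theorem shiftDerivation_of_inl (z : Z) : shiftDerivation r (of R (.inl z)) = r z := by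
  simp [shiftDerivation]

@[simp]
theorem shiftDerivation_of_inr (p : ℕ × Y) :
    shiftDerivation r (of R (.inr p)) = of R (.inr (p.1 + 1, p.2)) := by
  simp [shiftDerivation]

@[simp]
theorem elimHom_of_inl (z : Z) : elimHom u a b (of R (.inl z)) = a z := by
  simp [elimHom]

@[simp]
theorem elimHom_of_inr (p : ℕ × Y) :
    elimHom u a b (of R (.inr p)) = (ad R M u ^ p.1) (b p.2) := by
  simp [elimHom]

theorem lie_elimHom (hr : ∀ z, ⁅u, a z⁆ = elimHom u a b (r z)) (v) :
    ⁅u, elimHom u a b v⁆ = elimHom u a b (shiftDerivation r v) := by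
  have := derivation_map_of_eq (E := LieDerivation.ad R M u) (φ := elimHom u a b)
    (D := shiftDerivation r) (fun x ↦ ?_) v
  · simpa using this
  · rcases x with z | ⟨k, y⟩
    · simpa using hr z
    · simp [pow_succ']

theorem map_elimHom
    {f : M →ₗ⁅R⁆ FreeLieAlgebra R (Z ⊕ ℕ × Y) ⋊⁅derivationAction (shiftDerivation r)⁆ R}
    (hfu : f u = ⟨0, 1⟩) (hfa : ∀ z, f (a z) = ⟨of R (.inl z), 0⟩)
    (hfb : ∀ y, f (b y) = ⟨of R (.inr (0, y)), 0⟩) (v) : f (elimHom u a b v) = ⟨v, 0⟩ := by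
  have f_pow (k : ℕ) (y : Y) : f ((ad R M u ^ k) (b y)) = ⟨of R (.inr (k, y)), 0⟩ := by
    induction k with
    | zero => exact hfb y
    | succ k ih =>
      rw [pow_succ', Module.End.mul_apply, ad_apply, LieHom.map_lie, hfu, ih, right_one_lie_left]
      simp
  refine LieHom.congr_fun (f := f.comp (elimHom u a b))
    (g := SemiDirectSum.inl (derivationAction (shiftDerivation r)))
    (FreeLieAlgebra.hom_ext fun x ↦ ?_) v
  rcases x with z | ⟨k, y⟩
  · simp [hfa]
  · simp [f_pow]

theorem lieSpan_insert_range_elimHom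
    (hgen : LieSubalgebra.lieSpan R M (insert u (Set.range a ∪ Set.range b)) = ⊤) :
    LieSubalgebra.lieSpan R M (insert u (Set.range (elimHom (R := R) u a b))) = ⊤ := by
  refine top_unique (hgen ▸ LieSubalgebra.lieSpan_mono (Set.insert_subset_insert ?_))
  rintro _ (⟨z, rfl⟩ | ⟨y, rfl⟩)
  · exact ⟨of R (.inl z), by simp⟩
  · exact ⟨of R (.inr (0, y)), by simp⟩

/-- The weight of `(ad u)ᵏ y`, for `u` of weight `c` and `y` of weight `β y`. -/
def shiftWeight (c : ℕ) (β : Y → ℕ) (p : ℕ × Y) : ℕ :=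
  p.1 * c + β p.2

theorem derivation_elimHom {E : LieDerivation R M M} {c : ℕ} {α : Z → ℕ} {β : Y → ℕ}
    (hEu : E u = (c : R) • u) (hEa : ∀ z, E (a z) = (α z : R) • a z)
    (hEb : ∀ y, E (b y) = (β y : R) • b y) (v) :
    E (elimHom u a b v) = elimHom u a b (weightDerivation R (Sum.elim α (shiftWeight c β)) v) := by
  have E_pow (k : ℕ) (y : Y) :
      E ((ad R M u ^ k) (b y)) = ((k * c + β y : ℕ) : R) • (ad R M u ^ k) (b y) := by
    induction k with
    | zero => simp [hEb]
    | succ k ih =>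
      simp only [pow_succ', Module.End.mul_apply, ad_apply, LieDerivation.apply_lie_eq_add, ih, hEu,
        lie_smul, smul_lie, ← add_smul]
      push_cast
      ring_nf
  refine derivation_map_of_eq (fun x ↦ ?_) v
  rcases x with z | ⟨k, y⟩
  · simp [hEa]
  · simp [shiftWeight, E_pow]

end Elimination

section WeightSeries

open PowerSeries

variable {A ι Y Z : Type*} [CommRing A]

/-- The generating function `∑ x, X ^ w x`, encoded by counting the `x` of each weight, which must
be finite in number for the coefficient not to be the junk value `0`. -/
noncomputable def weightSeries (A : Type*) [CommRing A] (w : ι → ℕ) : A⟦X⟧ :=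
  PowerSeries.mk fun n ↦ (Nat.card {x // w x = n} : A)

@[simp]
theorem coeff_weightSeries (w : ι → ℕ) (n : ℕ) :
    coeff n (weightSeries A w) = (Nat.card {x // w x = n} : A) :=
  coeff_mk _ _

theorem weightSeries_comp_equiv (e : ι ≃ Y) (w : Y → ℕ) :
    weightSeries A (w ∘ e) = weightSeries A w := by
  ext n
  rw [coeff_weightSeries, coeff_weightSeries,
    Nat.card_congr (e.subtypeEquiv (p := fun x ↦ (w ∘ e) x = n)
      (q := fun y ↦ w y = n) fun _ ↦ Iff.rfl)]

theorem weightSeries_eq_sum [Fintype ι] (w : ι → ℕ) :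
    weightSeries A w = ∑ x, (X : A⟦X⟧) ^ w x := by
  ext n
  simp [coeff_X_pow, Finset.sum_boole, Fintype.card_subtype, eq_comm]

theorem finite_fiber_comp {f : ι → Y} (hf : Function.Injective f) {w : Y → ℕ}
    (hw : ∀ n, Finite {y // w y = n}) (n : ℕ) : Finite {x // w (f x) = n} :=
  have := hw n
  .of_injective (fun x ↦ (⟨f x, x.2⟩ : {y // w y = n})) fun _ _ h ↦
    Subtype.ext (hf (congrArg Subtype.val h))

theorem finite_fiber_sumElim {α : Z → ℕ} {β : Y → ℕ} (hα : ∀ n, Finite {z // α z = n})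
    (hβ : ∀ n, Finite {y // β y = n}) (n : ℕ) : Finite {x // Sum.elim α β x = n} :=
  have := hα n
  have := hβ n
  .of_equiv ({z // α z = n} ⊕ {y // β y = n})
    (Equiv.subtypeSum (p := (Sum.elim α β · = n))).symm

theorem weightSeries_sumElim {α : Z → ℕ} {β : Y → ℕ} (hα : ∀ n, Finite {z // α z = n})
    (hβ : ∀ n, Finite {y // β y = n}) :
    weightSeries A (Sum.elim α β) = weightSeries A α + weightSeries A β := by
  ext n
  have := hα n
  have := hβ n
  rw [map_add, coeff_weightSeries, coeff_weightSeries, coeff_weightSeries,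
    Nat.card_congr Equiv.subtypeSum, ← Nat.cast_add, ← Nat.card_sum]
  rfl

/-- The generators not in `s`. -/
abbrev Outside (s : Finset ι) : Type _ :=
  {x // x ∉ s}

theorem weightSeries_eq_sum_add (s : Finset ι) {w : ι → ℕ} (hw : ∀ n, Finite {x // w x = n}) :
    weightSeries A w =
      ∑ x ∈ s, (X : A⟦X⟧) ^ w x + weightSeries A fun x : Outside s ↦ w x := by
  classical
  have sumElim_eq : w ∘ Equiv.sumCompl (· ∈ s) =
      Sum.elim (fun x : {x // x ∈ s} ↦ w x) fun x : Outside s ↦ w x := by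
    ext (x | x) <;> rfl
  rw [← weightSeries_comp_equiv (Equiv.sumCompl (· ∈ s)) w, sumElim_eq,
    weightSeries_sumElim (fun _ ↦ Subtype.finite) (finite_fiber_comp Subtype.val_injective hw),
    weightSeries_eq_sum, Finset.sum_coe_sort s fun x ↦ (X : A⟦X⟧) ^ w x]

theorem weightSeries_const_add (c : ℕ) (w : ι → ℕ) :
    weightSeries A (fun x ↦ c + w x) = X ^ c * weightSeries A w := by
  ext n
  rw [coeff_X_pow_mul', coeff_weightSeries]
  split_ifs with h
  · have fiber_iff (x : ι) : c + w x = n ↔ w x = n - c := by lia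
    rw [coeff_weightSeries, Nat.card_congr (Equiv.subtypeEquivRight fiber_iff)]
  · have : IsEmpty {x // c + w x = n} := ⟨fun x ↦ h (by lia)⟩
    simp

variable {β : Y → ℕ} {c : ℕ}

theorem finite_fiber_shiftWeight (hβ : ∀ n, Finite {y // β y = n}) (hc : 1 ≤ c) (n : ℕ) :
    Finite {p // shiftWeight c β p = n} := by
  have fiber_subset : {p : ℕ × Y | shiftWeight c β p = n} ⊆
      ⋃ k ∈ Set.Iic n, Prod.mk k '' {y | β y = n - k * c} := by
    rintro ⟨k, y⟩ (h : k * c + β y = n)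
    have hk : k ≤ n := by nlinarith
    exact Set.mem_biUnion hk ⟨y, by grind, rfl⟩
  have finite_iUnion := (Set.finite_Iic n).biUnion fun k _ ↦
    (Set.finite_coe_iff.1 (hβ (n - k * c))).image (Prod.mk k)
  exact (finite_iUnion.subset fiber_subset).to_subtype

theorem one_sub_X_pow_mul_weightSeries_shiftWeight (hβ : ∀ n, Finite {y // β y = n})
    (hc : 1 ≤ c) :
    (1 - X ^ c) * weightSeries A (shiftWeight c β) = weightSeries A β := by
  let e : Y ⊕ ℕ × Y ≃ ℕ × Y :=
    { toFun := Sum.elim (fun y ↦ (0, y)) fun p ↦ (p.1 + 1, p.2)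
      invFun := fun | (0, y) => .inl y | (k + 1, y) => .inr (k, y)
      left_inv := by rintro (y | ⟨k, y⟩) <;> rfl
      right_inv := by rintro ⟨_ | k, y⟩ <;> rfl }
  have comp_e : shiftWeight c β ∘ e = Sum.elim β fun p ↦ c + shiftWeight c β p := by
    ext (y | ⟨k, y⟩)
    · simp [e, shiftWeight]
    · simp only [e, shiftWeight, Function.comp_apply, Equiv.coe_fn_mk, Sum.elim_inr]
      ring
  have finite_inr (n : ℕ) : Finite {p // c + shiftWeight c β p = n} := by
    have := finite_fiber_comp (e.injective.comp Sum.inr_injective)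
      (finite_fiber_shiftWeight hβ hc) n
    exact this.of_equiv _ (Equiv.subtypeEquivRight fun p ↦ by
      rw [← Sum.elim_inr β fun p ↦ c + shiftWeight c β p, ← comp_e]; rfl)
  have split : weightSeries A (shiftWeight c β) =
      weightSeries A β + X ^ c * weightSeries A (shiftWeight c β) := by
    rw [← weightSeries_const_add, ← weightSeries_sumElim hβ finite_inr, ← comp_e,
      weightSeries_comp_equiv]
  linear_combination split

theorem one_sub_X_pow_mul_one_sub_weightSeries {α : Z → ℕ} (hα : ∀ n, Finite {z // α z = n})
    (hβ : ∀ n, Finite {y // β y = n}) (hc : 1 ≤ c) :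
    (1 - X ^ c) * (1 - weightSeries A (Sum.elim α (shiftWeight c β))) =
      (1 - X ^ c) * (1 - weightSeries A α) - weightSeries A β := by
  rw [weightSeries_sumElim hα (finite_fiber_shiftWeight hβ hc)]
  linear_combination -one_sub_X_pow_mul_weightSeries_shiftWeight (A := A) hβ hc

end WeightSeries

section EulerProduct

open PowerSeries Finset

variable {K V W A : Type*} [CommRing K] [AddCommGroup V] [Module K V] [AddCommGroup W] [Module K W]
  [CommRing A]

/-- The homogeneous part of a product is the product of the homogeneous parts. -/
def degreePartProdEquiv (E : Module.End K V) (E' : Module.End K W) (n : ℕ) :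
    degreePart (E.prodMap E') n ≃ₗ[K] degreePart E n × degreePart E' n where
  toFun a := (⟨a.1.1, mem_degreePart.2 (congrArg Prod.fst (mem_degreePart.1 a.2))⟩,
    ⟨a.1.2, mem_degreePart.2 (congrArg Prod.snd (mem_degreePart.1 a.2))⟩)
  invFun a := ⟨(a.1, a.2),
    mem_degreePart.2 (Prod.ext (mem_degreePart.1 a.1.2) (mem_degreePart.1 a.2.2))⟩
  map_add' _ _ := rfl
  map_smul' _ _ := rfl

/-- The isomorphism of homogeneous parts induced by an isomorphism that respects the grading. -/
def degreePartCongr {E : Module.End K V} {E' : Module.End K W} (e : V ≃ₗ[K] W)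
    (h : ∀ a, E' (e a) = e (E a)) (n : ℕ) : degreePart E n ≃ₗ[K] degreePart E' n :=
  e.ofSubmodules _ _ <| by
    ext b
    obtain ⟨a, rfl⟩ := e.surjective b
    rw [Submodule.mem_map_equiv, e.symm_apply_apply, mem_degreePart, mem_degreePart, h,
      ← map_smul, e.injective.eq_iff]

/-- The Euler product `∏ (1 - X ^ r) ^ dim V_r` of a graded space `V` agrees with `s` up to degree
`R`. Finiteness is required since `Module.finrank` is `0` on infinite-dimensional spaces. -/
structure HasEulerProduct (E : Module.End K V) (R : ℕ) (s : A⟦X⟧) : Prop where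
  finite : ∀ r ∈ Icc 1 R, Module.Finite K (degreePart E r)
  dvd : (X : A⟦X⟧) ^ (R + 1) ∣
    ∏ r ∈ Icc 1 R, (1 - X ^ r) ^ Module.finrank K (degreePart E r) - s

variable {E : Module.End K V} {R : ℕ} {s : A⟦X⟧}

theorem HasEulerProduct.coeff_eq (hE : HasEulerProduct E R s) {m : ℕ} (hm : m ≤ R) :
    coeff m (∏ r ∈ Icc 1 R, (1 - X ^ r : A⟦X⟧) ^ Module.finrank K (degreePart E r)) =
      coeff m s := by
  rw [← sub_eq_zero, ← map_sub]
  exact X_pow_dvd_iff.1 hE.dvd m (Nat.lt_succ_of_le hm)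

end EulerProduct

section EulerProductOfField

open PowerSeries Finset

variable {K V W A : Type*} [Field K] [CharZero K] [AddCommGroup V] [Module K V] [AddCommGroup W]
  [Module K W] [CommRing A] {E : Module.End K V} {E' : Module.End K W} {R : ℕ} {s : A⟦X⟧}

theorem degreePart_smul_id (c n : ℕ) :
    degreePart ((c : K) • (LinearMap.id : Module.End K V)) n = if n = c then ⊤ else ⊥ := by
  ext a
  rw [mem_degreePart, LinearMap.smul_apply, LinearMap.id_apply, ← sub_eq_zero, ← sub_smul,
    smul_eq_zero, sub_eq_zero, Nat.cast_inj]
  split_ifs with h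
  · simp [h]
  · simp [Ne.symm h]

theorem finite_and_finrank_degreePart_of_bijective_coprod {φ : V →ₗ[K] W} {u : W} {c : ℕ}
    (hbij : Function.Bijective (φ.coprod (LinearMap.toSpanSingleton K W u)))
    (hφ : ∀ a, E' (φ a) = φ (E a)) (hu : E' u = (c : K) • u) (r : ℕ)
    [Module.Finite K (degreePart E r)] :
    Module.Finite K (degreePart E' r) ∧ Module.finrank K (degreePart E' r) =
      Module.finrank K (degreePart E r) + if r = c then 1 else 0 := by
  let e : (degreePart E r × degreePart ((c : K) • (LinearMap.id : Module.End K K)) r) ≃ₗ[K]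
      degreePart E' r :=
    (degreePartProdEquiv E _ r).symm.trans <|
      degreePartCongr (.ofBijective _ hbij) (fun p ↦ by simp [hφ, hu, smul_smul, mul_comm]) r
  refine ⟨.equiv e, ?_⟩
  rw [← e.finrank_eq, Module.finrank_prod, degreePart_smul_id]
  obtain rfl | h := eq_or_ne r c
  · rw [if_pos rfl, if_pos rfl, finrank_top, Module.finrank_self]
  · rw [if_neg h, if_neg h, finrank_bot]

theorem HasEulerProduct.of_bijective_coprod {φ : V →ₗ[K] W} {u : W} {c : ℕ}
    (hE : HasEulerProduct E R s)
    (hbij : Function.Bijective (φ.coprod (LinearMap.toSpanSingleton K W u)))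
    (hφ : ∀ a, E' (φ a) = φ (E a)) (hu : E' u = (c : K) • u) (hc : c ∈ Icc 1 R) :
    HasEulerProduct E' R ((1 - X ^ c) * s) := by
  have finite_and_finrank (r) (hr : r ∈ Icc 1 R) :=
    have := hE.finite r hr
    finite_and_finrank_degreePart_of_bijective_coprod hbij hφ hu r
  refine ⟨fun r hr ↦ (finite_and_finrank r hr).1, ?_⟩
  have prod_eq : ∏ r ∈ Icc 1 R, (1 - X ^ r : A⟦X⟧) ^ Module.finrank K (degreePart E' r) =
      (1 - X ^ c) * ∏ r ∈ Icc 1 R, (1 - X ^ r) ^ Module.finrank K (degreePart E r) := by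
    rw [prod_congr rfl fun r hr ↦ by rw [(finite_and_finrank r hr).2, pow_add], prod_mul_distrib,
      mul_comm]
    simp [pow_ite, hc]
  rw [prod_eq, ← mul_sub]
  exact hE.dvd.mul_left _

theorem HasEulerProduct.of_degreeGE_eq_top (h : degreeGE E (R + 1) = ⊤)
    (hs : X ^ (R + 1) ∣ 1 - s) : HasEulerProduct E R s := by
  have degreePart_eq_bot (r) (hr : r ∈ Icc 1 R) : degreePart E r = ⊥ := by
    have := disjoint_degreePart_degreeGE E (Nat.lt_succ_of_le (mem_Icc.1 hr).2)
    rwa [h, disjoint_top] at this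
  refine ⟨fun r hr ↦ degreePart_eq_bot r hr ▸ inferInstance, ?_⟩
  rwa [prod_eq_one fun r hr ↦ by rw [degreePart_eq_bot r hr, finrank_bot, pow_zero]]

end EulerProductOfField

section Free

attribute [local instance] LieRing.ofAssociativeRing

open PowerSeries LieAlgebra FreeLieAlgebra Finset

universe v

variable {K A M Y Z : Type*} {ι : Type v} [Field K] [CommRing A] [LieRing M] [LieAlgebra K M]

theorem degreeGE_weightDerivation_eq_top {K : Type*} [CommRing K] {w : ι → ℕ} {N : ℕ}
    (hw : ∀ x, N ≤ w x) :
    degreeGE (weightDerivation K w).toLinearMap N = ⊤ :=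
  degreeGE_eq_top (lieSpan_range_of_eq_top ι) <| Set.range_subset_iff.2 fun x ↦
    degreePart_le_degreeGE _ (hw x) (mem_degreePart.2 (weightDerivation_of w x))

theorem X_pow_dvd_weightSeries {w : ι → ℕ} {N : ℕ} (hw : ∀ x, N ≤ w x) :
    (X : A⟦X⟧) ^ N ∣ weightSeries A w := by
  refine X_pow_dvd_iff.2 fun n hn ↦ ?_
  have : IsEmpty {x // w x = n} := ⟨fun ⟨x, hx⟩ ↦ (hw x).not_gt (hx ▸ hn)⟩
  simp

variable [CharZero K]

theorem HasEulerProduct.of_elimHom {R c : ℕ} {s : A⟦X⟧} {α : Z → ℕ} {β : Y → ℕ}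
    (h : HasEulerProduct (weightDerivation K (Sum.elim α (shiftWeight c β))).toLinearMap R s)
    (hc : c ∈ Icc 1 R) {u : M} {a : Z → M} {b : Y → M}
    (hgen : LieSubalgebra.lieSpan K M (insert u (Set.range a ∪ Set.range b)) = ⊤)
    {r : Z → FreeLieAlgebra K (Z ⊕ ℕ × Y)} (hr : ∀ z, ⁅u, a z⁆ = elimHom u a b (r z))
    {f : M →ₗ⁅K⁆ FreeLieAlgebra K (Z ⊕ ℕ × Y) ⋊⁅derivationAction (shiftDerivation r)⁆ K}
    (hfu : f u = ⟨0, 1⟩) (hfa : ∀ z, f (a z) = ⟨of K (.inl z), 0⟩)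
    (hfb : ∀ y, f (b y) = ⟨of K (.inr (0, y)), 0⟩) {E : LieDerivation K M M}
    (hEu : E u = (c : K) • u) (hEa : ∀ z, E (a z) = (α z : K) • a z)
    (hEb : ∀ y, E (b y) = (β y : K) • b y) :
    HasEulerProduct E.toLinearMap R ((1 - X ^ c) * s) :=
  h.of_bijective_coprod (bijective_coprod_toSpanSingleton (lie_elimHom hr)
    (lieSpan_insert_range_elimHom hgen) (map_elimHom hfu hfa hfb) hfu)
    (derivation_elimHom hEu hEa hEb) hEu hc

/-- The weights of the generators left after eliminating `y` from a free Lie algebra, where no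
bracket with `y` is prescribed. -/
def elimWeight (w : ι → ℕ) (y : ι) : Empty ⊕ ℕ × Outside {y} → ℕ :=
  Sum.elim Empty.elim (shiftWeight (w y) fun x ↦ w x)

variable {R : ℕ} {w : ι → ℕ} {y : ι}

theorem finite_fiber_elimWeight (hw : ∀ n, Finite {x // w x = n}) (hy : 1 ≤ w y) (n : ℕ) :
    Finite {p // elimWeight w y p = n} :=
  finite_fiber_sumElim (fun _ ↦ Subtype.finite)
    (finite_fiber_shiftWeight (finite_fiber_comp Subtype.val_injective hw) hy) n

theorem le_elimWeight {N : ℕ} (hw : ∀ x, N ≤ w x) (p) : N ≤ elimWeight w y p := by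
  obtain ⟨⟨⟩⟩ | ⟨k, x⟩ := p
  exact (hw x).trans (Nat.le_add_left _ _)

theorem card_fiber_elimWeight_lt (hw : ∀ n, Finite {x // w x = n}) (pos : 1 ≤ w y)
    (hy : ∀ x, w y ≤ w x) :
    Nat.card {p // elimWeight w y p = w y} < Nat.card {x // w x = w y} := by
  have fiber_eq {k : ℕ} {x : Outside {y}}
      (h : elimWeight w y (.inr (k, x)) = w y) : k = 0 ∧ w x = w y := by
    change k * w y + w x = w y at h
    have := hy x
    obtain rfl | hk := k.eq_zero_or_pos
    · simpa using h
    · nlinarith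
  have := hw (w y)
  let toFiber : {p // elimWeight w y p = w y} → {q : {x // w x = w y} // q.1 ≠ y}
    | ⟨.inr (k, x), h⟩ => ⟨⟨x, (fiber_eq h).2⟩, notMem_singleton.1 x.2⟩
  have inj : Function.Injective toFiber := by
    rintro ⟨⟨⟨⟩⟩ | ⟨k, x⟩, h⟩ ⟨⟨⟨⟩⟩ | ⟨l, z⟩, h'⟩ eq
    obtain rfl := (fiber_eq h).1
    obtain rfl := (fiber_eq h').1
    obtain rfl : x = z := Subtype.ext (congrArg (fun q ↦ (q.1 : ι)) eq)
    rfl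
  exact (Nat.card_le_card_of_injective toFiber inj).trans_lt
    (Finite.card_subtype_lt (x := ⟨y, rfl⟩) (not_not.2 rfl))

theorem one_sub_X_pow_mul_one_sub_weightSeries_elimWeight
    (hw : ∀ n, Finite {x // w x = n}) (hy : 1 ≤ w y) :
    (1 - X ^ w y) * (1 - weightSeries A (elimWeight w y)) = 1 - weightSeries A w := by
  rw [elimWeight, one_sub_X_pow_mul_one_sub_weightSeries (fun _ ↦ Subtype.finite)
    (finite_fiber_comp Subtype.val_injective hw) hy, weightSeries_eq_sum_add {y} hw,
    weightSeries_eq_sum, univ_eq_empty, sum_empty, sum_singleton]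
  ring

theorem HasEulerProduct.of_elimWeight {s : A⟦X⟧} (hy : w y ∈ Icc 1 R)
    (h : HasEulerProduct (weightDerivation K (elimWeight w y)).toLinearMap R s) :
    HasEulerProduct (weightDerivation K w).toLinearMap R ((1 - X ^ w y) * s) := by
  classical
  let r : Empty → FreeLieAlgebra K (Empty ⊕ ℕ × Outside {y}) := Empty.elim
  let b (x : Outside {y}) : FreeLieAlgebra K ι := of K x
  let f : FreeLieAlgebra K ι →ₗ⁅K⁆ _ ⋊⁅derivationAction (shiftDerivation r)⁆ K :=
    lift K fun x ↦ if hx : x ∈ ({y} : Finset ι) then ⟨0, 1⟩ else ⟨of K (.inr (0, ⟨x, hx⟩)), 0⟩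
  have hgen : LieSubalgebra.lieSpan K _
      (insert (of K y) (Set.range Empty.elim ∪ Set.range b)) = ⊤ := by
    refine top_unique ((lieSpan_range_of_eq_top ι).ge.trans (LieSubalgebra.lieSpan_mono ?_))
    rintro _ ⟨x, rfl⟩
    by_cases hx : x ∈ ({y} : Finset ι)
    · exact .inl (by rw [mem_singleton.1 hx])
    · exact .inr (.inr ⟨⟨x, hx⟩, rfl⟩)
  exact h.of_elimHom hy hgen (r := r) nofun (f := f) (by simp [f]) nofun
    (fun x ↦ by simp [f, b, mem_singleton.not.1 x.2]) (weightDerivation_of w y) nofun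
    fun x ↦ weightDerivation_of w x

theorem hasEulerProduct_weightDerivation_of_succ {N : ℕ} (hN : N ∈ Icc 1 R)
    (ih : ∀ (ι : Type v) (w : ι → ℕ), (∀ n, Finite {x // w x = n}) → (∀ x, N + 1 ≤ w x) →
      HasEulerProduct (weightDerivation K w).toLinearMap R (1 - weightSeries A w))
    (ι : Type v) (w : ι → ℕ) (hw : ∀ n, Finite {x // w x = n}) (hwN : ∀ x, N ≤ w x) :
      HasEulerProduct (weightDerivation K w).toLinearMap R (1 - weightSeries A w) := by
  induction hd : Nat.card {x // w x = N} using Nat.strong_induction_on generalizing ι with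
  | _ d ihd =>
    by_cases hy : ∃ y, w y = N
    · obtain ⟨y, rfl⟩ := hy
      have pos := (mem_Icc.1 hN).1
      rw [← one_sub_X_pow_mul_one_sub_weightSeries_elimWeight hw pos]
      exact .of_elimWeight hN <| ihd _ (hd ▸ card_fiber_elimWeight_lt hw pos hwN) _ _
        (finite_fiber_elimWeight hw pos) (le_elimWeight hwN) rfl
    · exact ih ι w hw fun x ↦ (hwN x).lt_of_ne' fun h ↦ hy ⟨x, h⟩

theorem hasEulerProduct_weightDerivation (hw : ∀ n, Finite {x // w x = n}) (pos : ∀ x, 1 ≤ w x) :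
    HasEulerProduct (weightDerivation K w).toLinearMap R (1 - weightSeries A w) := by
  revert ι
  refine Nat.decreasingInduction' (m := 1) (n := R + 1)
    (P := fun N ↦ ∀ {ι : Type v} {w : ι → ℕ}, (∀ n, Finite {x // w x = n}) → (∀ x, N ≤ w x) →
      HasEulerProduct (weightDerivation K w).toLinearMap R (1 - weightSeries A w)) ?_ ?_ ?_
  · intro N hN hN' ih _ _ hw hwN
    exact hasEulerProduct_weightDerivation_of_succ (mem_Icc.2 ⟨hN', Nat.le_of_lt_succ hN⟩)
      (fun _ _ ↦ ih) _ _ hw hwN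
  · exact Nat.le_add_left 1 R
  · intro _ _ _ hw
    exact .of_degreeGE_eq_top (degreeGE_weightDerivation_eq_top hw) <| by
      simpa using X_pow_dvd_weightSeries hw

end Free

section OneRelator

attribute [local instance] LieRing.ofAssociativeRing

open PowerSeries LieAlgebra FreeLieAlgebra Finset

variable {K A ι : Type*} [CommRing K] [CommRing A] [DecidableEq ι] {x y : ι}
  (ρ : FreeLieAlgebra K (Outside {x, y})) {w : ι → ℕ}

/-- The relation `⁅x, y⁆ + ρ`, where `ρ` involves neither `x` nor `y`. -/
noncomputable def pairRelation : FreeLieAlgebra K ι :=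
  ⁅of K x, of K y⁆ + lift K (fun z : Outside {x, y} ↦ of K (z : ι)) ρ

/-- The Lie ideal generated by the relation `⁅x, y⁆ + ρ`. -/
noncomputable def pairRelationIdeal : LieIdeal K (FreeLieAlgebra K ι) :=
  LieSubmodule.lieSpan K _ {pairRelation ρ}

theorem quotientMk_pairRelation : quotientMk (pairRelationIdeal ρ) (pairRelation ρ) = 0 :=
  quotientMk_eq_zero.2 (LieSubmodule.subset_lieSpan rfl)

variable {ρ}

theorem weightDerivation_mem_pairRelationIdeal
    (hρ : ρ ∈ degreePart
      (weightDerivation K fun z : Outside {x, y} ↦ w z).toLinearMap (w x + w y)) :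
    ∀ a ∈ pairRelationIdeal ρ, weightDerivation K w a ∈ pairRelationIdeal ρ := by
  rw [mem_degreePart, LieDerivation.coeFn_coe] at hρ
  have homogeneous : weightDerivation K w (pairRelation ρ) =
      ((w x + w y : ℕ) : K) • pairRelation ρ := by
    rw [pairRelation, map_add, derivation_map_of_eq (φ := lift K _)
      (D := weightDerivation K fun z : Outside {x, y} ↦ w z) (by simp), hρ,
      LieDerivation.apply_lie_eq_add, weightDerivation_of, weightDerivation_of, lie_smul, smul_lie,
      map_smul, ← add_smul, smul_add, add_comm (w x), Nat.cast_add]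
  exact fun a ↦ derivation_mem_lieSpan fun b hb ↦ by
    rw [Set.mem_singleton_iff.1 hb, homogeneous]
    exact SMulMemClass.smul_mem _ (LieSubmodule.subset_lieSpan rfl)

theorem one_sub_X_pow_mul_one_sub_weightSeries_pair (hxy : x ≠ y)
    (hw : ∀ n, Finite {z // w z = n}) (hy : 1 ≤ w y) :
    (1 - X ^ w y) * (1 - weightSeries A (Sum.elim (fun _ : Unit ↦ w x)
      (shiftWeight (w y) fun z : Outside {x, y} ↦ w z))) =
    1 - weightSeries A w + X ^ (w x + w y) := by
  rw [one_sub_X_pow_mul_one_sub_weightSeries (fun _ ↦ Subtype.finite)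
    (finite_fiber_comp Subtype.val_injective hw) hy, weightSeries_eq_sum_add {x, y} hw,
    weightSeries_eq_sum, Fintype.sum_unique, sum_pair hxy]
  ring

theorem lieSpan_insert_quotientMk_eq_top (I : LieIdeal K (FreeLieAlgebra K ι)) :
    LieSubalgebra.lieSpan K _ (insert (quotientMk I (of K y))
      (Set.range (fun _ : Unit ↦ quotientMk I (of K x)) ∪
        Set.range fun z : Outside {x, y} ↦ quotientMk I (of K (z : ι)))) = ⊤ := by
  refine top_unique ((lieSpan_image_eq_top (quotientMk_surjective I)
    (lieSpan_range_of_eq_top ι)).ge.trans (LieSubalgebra.lieSpan_mono ?_))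
  rintro _ ⟨_, ⟨z, rfl⟩, rfl⟩
  by_cases hz : z ∈ ({x, y} : Finset ι)
  · obtain rfl | hz := mem_insert.1 hz
    · exact .inr (.inl ⟨(), rfl⟩)
    · exact .inl (by rw [mem_singleton.1 hz])
  · exact .inr (.inr ⟨⟨z, hz⟩, rfl⟩)

variable (ρ) in
/-- The bracket of `y` with `x` modulo the relation `⁅x, y⁆ + ρ`, in terms of the generators left
after eliminating `y`. -/
noncomputable def pairShift (_ : Unit) :
    FreeLieAlgebra K (Unit ⊕ ℕ × Outside {x, y}) :=
  lift K (fun z ↦ of K (.inr (0, z))) ρ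

theorem lie_eq_elimHom_pairShift :
    ⁅quotientMk (pairRelationIdeal ρ) (of K y), quotientMk (pairRelationIdeal ρ) (of K x)⁆ =
    elimHom (quotientMk (pairRelationIdeal ρ) (of K y))
      (fun _ ↦ quotientMk (pairRelationIdeal ρ) (of K x))
      (fun z : Outside {x, y} ↦ quotientMk (pairRelationIdeal ρ) (of K (z : ι)))
        (pairShift ρ ()) := by
  set π := quotientMk (pairRelationIdeal ρ)
  have elimHom_lift : (elimHom (π (of K y)) (fun _ : Unit ↦ π (of K x))
      (fun z : Outside {x, y} ↦ π (of K (z : ι)))).comp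
        (lift K fun z ↦ of K (.inr (0, z))) =
          π.comp (lift K fun z : Outside {x, y} ↦ of K (z : ι)) :=
    FreeLieAlgebra.hom_ext fun z ↦ by simp [elimHom]
  have relation := quotientMk_pairRelation ρ
  rw [pairRelation, map_add, LieHom.map_lie] at relation
  rw [pairShift, ← LieHom.comp_apply, elimHom_lift, ← lie_skew, LieHom.comp_apply]
  exact neg_eq_of_add_eq_zero_right relation

theorem exists_lieHom_quotient_semiDirectSum (hxy : x ≠ y) :
    ∃ f : FreeLieAlgebra K ι ⧸ pairRelationIdeal ρ →ₗ⁅K⁆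
        _ ⋊⁅derivationAction (shiftDerivation (pairShift ρ))⁆ K,
      f (quotientMk _ (of K y)) = ⟨0, 1⟩ ∧ f (quotientMk _ (of K x)) = ⟨of K (.inl ()), 0⟩ ∧
        ∀ z : Outside {x, y},
          f (quotientMk _ (of K (z : ι))) = ⟨of K (.inr (0, z)), 0⟩ := by
  let f : FreeLieAlgebra K ι →ₗ⁅K⁆ _ ⋊⁅derivationAction (shiftDerivation (pairShift ρ))⁆ K :=
    lift K fun z ↦ if hz : z ∉ ({x, y} : Finset ι) then ⟨of K (.inr (0, ⟨z, hz⟩)), 0⟩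
      else if z = x then ⟨of K (.inl ()), 0⟩ else ⟨0, 1⟩
  have f_x : f (of K x) = ⟨of K (.inl ()), 0⟩ := by simp [f]
  have f_y : f (of K y) = ⟨0, 1⟩ := by simp [f, hxy.symm]
  have f_rest (z : Outside {x, y}) :
      f (of K (z : ι)) = ⟨of K (.inr (0, z)), 0⟩ := by
    simp only [f, lift_of_apply, dif_pos z.2]
  have f_lift : f.comp (lift K fun z : Outside {x, y} ↦ of K (z : ι)) =
      (SemiDirectSum.inl _).comp (lift K fun z ↦ of K (.inr (0, z))) :=
    FreeLieAlgebra.hom_ext fun z ↦ by simp [f_rest]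
  have f_relation : f (pairRelation ρ) = 0 := by
    rw [pairRelation, map_add, LieHom.map_lie, f_x, f_y, ← lie_skew, right_one_lie_left,
      shiftDerivation_of_inl, ← LieHom.comp_apply, f_lift]
    exact neg_add_cancel _
  refine ⟨quotientLift _ f (LieSubmodule.lieSpan_le.2 (Set.singleton_subset_iff.2 f_relation)), ?_⟩
  exact ⟨f_y, f_x, f_rest⟩

theorem hasEulerProduct_quotient_pairRelationIdeal {K : Type*} [Field K] [CharZero K]
    {ρ : FreeLieAlgebra K (Outside {x, y})} (hxy : x ≠ y)
    (hw : ∀ n, Finite {z // w z = n}) (pos : ∀ z, 1 ≤ w z)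
    (hρ : ρ ∈ degreePart
      (weightDerivation K fun z : Outside {x, y} ↦ w z).toLinearMap (w x + w y))
    {R : ℕ} (hR : w y ≤ R) :
    HasEulerProduct (quotientDerivation (pairRelationIdeal ρ) (weightDerivation K w)
      (weightDerivation_mem_pairRelationIdeal hρ)).toLinearMap R
      (1 - weightSeries A w + X ^ (w x + w y)) := by
  obtain ⟨f, f_y, f_x, f_rest⟩ := exists_lieHom_quotient_semiDirectSum (ρ := ρ) hxy
  have derivation_mk (z : ι) : quotientDerivation (pairRelationIdeal ρ) (weightDerivation K w)
      (weightDerivation_mem_pairRelationIdeal hρ) (quotientMk _ (of K z)) =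
      (w z : K) • quotientMk _ (of K z) := by simp
  rw [← one_sub_X_pow_mul_one_sub_weightSeries_pair hxy hw (pos y)]
  refine HasEulerProduct.of_elimHom (hasEulerProduct_weightDerivation ?_ ?_) (mem_Icc.2 ⟨pos y, hR⟩)
    (lieSpan_insert_quotientMk_eq_top _) (fun _ ↦ lie_eq_elimHom_pairShift) f_y (fun _ ↦ f_x) f_rest
    (derivation_mk y) (fun _ ↦ derivation_mk x) fun z ↦ derivation_mk z
  · exact finite_fiber_sumElim (fun _ ↦ Subtype.finite) <|
      finite_fiber_shiftWeight (finite_fiber_comp Subtype.val_injective hw) (pos y)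
  · rintro (_ | ⟨k, z⟩)
    · exact pos x
    · exact (pos z).trans (Nat.le_add_left _ _)

theorem exists_pairRelation_eq_sympRelation {g : ℕ} (hg : 1 ≤ g) :
    ∃ x y : Fin (2 * g), x ≠ y ∧ ∃ ρ : FreeLieAlgebra ℚ (Outside {x, y}),
      ρ ∈ degreePart (weightDerivation ℚ fun _ ↦ 1).toLinearMap 2 ∧
        pairRelation ρ = sympRelation g := by
  let x (i : Fin g) : Fin (2 * g) := ⟨i, by lia⟩
  let y (i : Fin g) : Fin (2 * g) := ⟨g + i, by lia⟩
  let i₀ : Fin g := ⟨0, hg⟩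
  let x' (i : {i // i ≠ i₀}) : Outside {x i₀, y i₀} := ⟨x i, by have := i.2; grind⟩
  let y' (i : {i // i ≠ i₀}) : Outside {x i₀, y i₀} := ⟨y i, by have := i.2; grind⟩
  refine ⟨x i₀, y i₀, by grind, ∑ i, ⁅of ℚ (x' i), of ℚ (y' i)⁆, sum_mem fun i _ ↦ ?_, ?_⟩
  · exact lie_mem_degreePart (m := 1) (n := 1) (mem_degreePart.2 (weightDerivation_of _ _))
      (mem_degreePart.2 (weightDerivation_of _ _))
  · rw [sympRelation, Fintype.sum_eq_add_sum_subtype_ne _ i₀]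
    simp [pairRelation, x, y, x', y']

end OneRelator

end LieElimination

open LieElimination in
theorem pbw_generating_function_symp_lie_algebra_general {ι : Type*} [Fintype ι] [DecidableEq ι]
    {x y : ι} (hxy : x ≠ y) {ρ : FreeLieAlgebra ℚ (Outside {x, y})}
    (hρ : ρ ∈ degreePart (weightDerivation ℚ fun _ ↦ 1).toLinearMap 2) {R : ℕ} (hR : 1 ≤ R)
    {m : ℕ} (hm : m ≤ R) :
    (∏ r ∈ Finset.Icc 1 R, ((1 : Polynomial ℚ) - Polynomial.X ^ r) ^
        Module.finrank ℚ (lcsQuotient (FreeLieAlgebra ℚ ι ⧸ pairRelationIdeal ρ) r)).coeff m =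
      ((1 : Polynomial ℚ) - Polynomial.C (Fintype.card ι : ℚ) * Polynomial.X +
        Polynomial.X ^ 2).coeff m := by
  have eulerProduct := hasEulerProduct_quotient_pairRelationIdeal (A := ℚ) hxy (w := fun _ ↦ 1)
    (fun _ ↦ Subtype.finite) (fun _ ↦ le_rfl) hρ hR
  have finrank_eq (r) (hr : r ∈ Finset.Icc 1 R) := finrank_lcsQuotient
    (lieSpan_image_eq_top (quotientMk_surjective (pairRelationIdeal ρ))
      (lieSpan_range_of_eq_top ι))
    (E := quotientDerivation _ _ (weightDerivation_mem_pairRelationIdeal (w := fun _ ↦ 1) hρ))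
    (by rintro _ ⟨_, ⟨z, rfl⟩, rfl⟩; simp) (Finset.mem_Icc.1 hr).1
  rw [Finset.prod_congr rfl fun r hr ↦ by rw [finrank_eq r hr], ← Polynomial.coeff_coe,
    ← Polynomial.coeff_coe]
  convert eulerProduct.coeff_eq hm using 2
  · rw [← Polynomial.coeToPowerSeries.ringHom_apply, map_prod]
    simp
  · rw [← Polynomial.coeToPowerSeries.ringHom_apply]
    simp [weightSeries_eq_sum, ← map_natCast (PowerSeries.C (R := ℚ)), -map_natCast]

/-- **PBW generating-function identity for `L_g`.**  Let `g ≥ 1` and for `r ≥ 1` let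
`ε_r = dim_ℚ (γ_r L_g / γ_{r+1} L_g)`.  Then for every `R ≥ 1` and every `1 ≤ m ≤ R`, the
coefficient of `z^m` in `∏_{r=1}^R (1 - z^r)^{ε_r}` equals the coefficient of `z^m` in
`1 - 2g·z + z²`. -/
theorem pbw_generating_function_symp_lie_algebra (g : ℕ) (hg : 1 ≤ g) (R : ℕ) (hR : 1 ≤ R) :
    ∀ m : ℕ, 1 ≤ m → m ≤ R →
      (∏ r ∈ Finset.Icc 1 R,
          ((1 : Polynomial ℚ) - Polynomial.X ^ r) ^
            Module.finrank ℚ (lcsQuotient (SympLieAlgebra g) r)).coeff m =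
      ((1 : Polynomial ℚ) - Polynomial.C (2 * g : ℚ) * Polynomial.X +
          Polynomial.X ^ 2).coeff m := by
  intro m _ hm
  obtain ⟨x, y, hxy, ρ, hρ, relation_eq⟩ :=
    LieElimination.exists_pairRelation_eq_sympRelation hg
  have ideal_eq : LieElimination.pairRelationIdeal ρ = sympIdeal g :=
    congrArg (LieSubmodule.lieSpan ℚ _ {·}) relation_eq
  have coeff_eq := pbw_generating_function_symp_lie_algebra_general hxy hρ hR hm
  rw [ideal_eq] at coeff_eq
  simpa using coeff_eq
end

section
/- Let g ≥ 2. Then the center of the Lie algebra L_g is trivial: the only element x ∈ L_g with ⁅y, x⁆ = 0 for all y ∈ L_g is x = 0. -/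
/-!
The relation rewrites as `⁅p, q⁆ = r`, where `p = x_1`, `q = x_{g+1}` and `r` does not involve `p`.
Eliminating `p` (Lazard elimination) then presents the quotient `L_g` as a semidirect product
`N ⋊ ℚ p` with `N` free: writing `(z, n)` for `(ad p)ⁿ z`, the action of `p` is the derivation `D`
sending `(z, n)` to `(z, n + 1)`, except for `(q, 0) ↦ r`. We let `z` range over all letters and `n`
over `ℕ`; the superfluous letters only enlarge the semidirect product in which `L_g` embeds.

Let `(k, t)` be the image of a central element and `z` a letter other than `p` and `q`. Bracketing
with `p` gives `D k = 0`, and bracketing with `z` gives `⁅(z, 0), k⁆ = t (z, 1)`. The left side is a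
commutator, so `t = 0` and `k` commutes with `(z, 0)`; applying `D`, it commutes with `(z, 1)` too.
An element of a free Lie algebra commuting with two distinct letters vanishes, because it does so in
the free associative algebra up to a scalar. That the free Lie algebra embeds there is deduced from
the injectivity of its Euler derivation, the one fixing every letter.
-/

open FreeLieAlgebra LieAlgebra.SemiDirectSum

attribute [local instance] LieRing.ofAssociativeRing

theorem lieSpan_range_freeLieAlgebra_of (R X : Type*) [CommRing R] :
    LieSubalgebra.lieSpan R (FreeLieAlgebra R X) (Set.range (of R)) = ⊤ := by
  set S := LieSubalgebra.lieSpan R (FreeLieAlgebra R X) (Set.range (of R))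
  let toS : FreeLieAlgebra R X →ₗ⁅R⁆ S :=
    lift R fun z => ⟨of R z, LieSubalgebra.subset_lieSpan ⟨z, rfl⟩⟩
  have incl_comp_toS : S.incl.comp toS = LieHom.id := by
    ext z
    simp [toS]
  refine eq_top_iff.mpr fun u _ => ?_
  have coe_toS : (toS u : FreeLieAlgebra R X) = u := LieHom.congr_fun incl_comp_toS u
  exact coe_toS ▸ (toS u).2

/-! ### Derivations of free Lie algebras -/

section FreeDerivation

variable {R X M : Type*} [CommRing R] [AddCommGroup M] [Module R M]
  [LieRingModule (FreeLieAlgebra R X) M] [LieModule R (FreeLieAlgebra R X) M]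

/-- The representation of the free Lie algebra on `M × R` by affine vector fields in which a letter
`z` acts by `(m, t) ↦ (⁅z, m⁆ + t • f z, 0)`. It is used to construct the derivation extending `f`
and to show that this derivation factors through the free associative algebra. -/
noncomputable def freeLieAffineRep (f : X → M) : FreeLieAlgebra R X →ₗ⁅R⁆ Module.End R (M × R) :=
  lift R fun z => LinearMap.inl R M R ∘ₗ
    (LieModule.toEnd R (FreeLieAlgebra R X) M (of R z)).coprod (LinearMap.toSpanSingleton R M (f z))

theorem exists_freeLieAffineRep_apply_eq (f : X → M) (x : FreeLieAlgebra R X) :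
    ∃ d : M, ∀ v, freeLieAffineRep f x v = (⁅x, v.1⁆ + v.2 • d, 0) := by
  have hx : x ∈ LieSubalgebra.lieSpan R (FreeLieAlgebra R X) (Set.range (of R)) := by
    simp [lieSpan_range_freeLieAlgebra_of]
  induction hx using LieSubalgebra.lieSpan_induction with
  | mem x hx =>
    obtain ⟨z, rfl⟩ := hx
    exact ⟨f z, fun v => by simp [freeLieAffineRep]⟩
  | zero => exact ⟨0, fun v => by simp [Prod.zero_eq_mk]⟩
  | add x y _ _ hx hy =>
    obtain ⟨⟨d, hd⟩, e, he⟩ := And.intro hx hy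
    exact ⟨d + e, fun v => by simp [hd, he, add_add_add_comm]⟩
  | smul t x _ hx =>
    obtain ⟨d, hd⟩ := hx
    exact ⟨t • d, fun v => by simp [hd, smul_comm t]⟩
  | lie x y _ _ hx hy =>
    obtain ⟨⟨d, hd⟩, e, he⟩ := And.intro hx hy
    refine ⟨⁅x, e⁆ - ⁅y, d⁆, fun v => ?_⟩
    simp only [LieHom.map_lie, Ring.lie_def, LinearMap.sub_apply, Module.End.mul_apply, he, hd,
      lie_add, lie_smul, zero_smul, add_zero, Prod.mk_sub_mk, sub_self, lie_lie, smul_sub,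
      Prod.mk.injEq, and_true]
    abel

/-- The derivation of the free Lie algebra into a module with prescribed values `f` on the letters,
read off as the translation part of `freeLieAffineRep f`. -/
noncomputable def freeLieDerivation (f : X → M) : LieDerivation R (FreeLieAlgebra R X) M where
  toFun x := (freeLieAffineRep f x (0, 1)).1
  map_add' x y := by simp
  map_smul' t x := by simp
  leibniz' x y := by
    obtain ⟨d, hd⟩ := exists_freeLieAffineRep_apply_eq f x
    obtain ⟨e, he⟩ := exists_freeLieAffineRep_apply_eq f y
    simp [Ring.lie_def, hd, he]

theorem freeLieDerivation_apply (f : X → M) (x : FreeLieAlgebra R X) :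
    freeLieDerivation f x = (freeLieAffineRep f x (0, 1)).1 := rfl

@[simp]
theorem freeLieDerivation_of (f : X → M) (z : X) : freeLieDerivation f (of R z) = f z := by
  simp [freeLieDerivation_apply, freeLieAffineRep]

end FreeDerivation

section EulerDerivation

open Module.End

variable {R L : Type*} [CommRing R] [LieRing L] [LieAlgebra R L]

theorem lie_mem_eigenspace_add (D : LieDerivation R L L) {μ ν : R} {x y : L}
    (hx : x ∈ eigenspace (D : Module.End R L) μ) (hy : y ∈ eigenspace (D : Module.End R L) ν) :
    ⁅x, y⁆ ∈ eigenspace (D : Module.End R L) (μ + ν) := by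
  simp only [mem_eigenspace_iff, LieDerivation.coeFn_coe] at hx hy ⊢
  rw [D.apply_lie_eq_add, hx, hy, smul_lie, lie_smul, add_smul, add_comm]

theorem lie_mem_iSup_eigenspace_succ (D : LieDerivation R L L) {x y : L}
    (hx : x ∈ ⨆ n : ℕ, eigenspace (D : Module.End R L) ((n + 1 : ℕ) : R))
    (hy : y ∈ ⨆ n : ℕ, eigenspace (D : Module.End R L) ((n + 1 : ℕ) : R)) :
    ⁅x, y⁆ ∈ ⨆ n : ℕ, eigenspace (D : Module.End R L) ((n + 1 : ℕ) : R) := by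
  induction hx using Submodule.iSup_induction' with
  | zero => simp
  | add x x' _ _ hx hx' => simpa only [add_lie] using add_mem hx hx'
  | mem m x hx =>
    induction hy using Submodule.iSup_induction' with
    | zero => simp
    | add y y' _ _ hy hy' => simpa only [lie_add] using add_mem hy hy'
    | mem n y hy =>
      refine Submodule.mem_iSup_of_mem (m + 1 + n) ?_
      simpa [add_assoc] using lie_mem_eigenspace_add D hx hy

theorem iSup_eigenspace_succ_eq_top (D : LieDerivation R L L) {s : Set L}
    (hs : LieSubalgebra.lieSpan R L s = ⊤) (hD : ∀ x ∈ s, D x = x) :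
    ⨆ n : ℕ, eigenspace (D : Module.End R L) ((n + 1 : ℕ) : R) = ⊤ := by
  refine Submodule.eq_top_iff'.mpr fun x => ?_
  have hx : x ∈ LieSubalgebra.lieSpan R L s := by simp [hs]
  induction hx using LieSubalgebra.lieSpan_induction with
  | mem x hx => exact Submodule.mem_iSup_of_mem 0 (by simp [hD x hx])
  | zero => exact zero_mem _
  | add x y _ _ hx hy => exact add_mem hx hy
  | smul t x _ hx => exact Submodule.smul_mem _ t hx
  | lie x y _ _ hx hy => exact lie_mem_iSup_eigenspace_succ D hx hy

theorem lieDerivation_injective_of_fixes_generators [IsDomain R] [CharZero R]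
    [Module.IsTorsionFree R L] (D : LieDerivation R L L) {s : Set L}
    (hs : LieSubalgebra.lieSpan R L s = ⊤) (hD : ∀ x ∈ s, D x = x) : Function.Injective D := by
  have disjoint_top : Disjoint (eigenspace (D : Module.End R L) 0) ⊤ := by
    rw [← iSup_eigenspace_succ_eq_top D hs hD]
    exact (eigenspaces_iSupIndep (D : Module.End R L) 0).mono_right <| iSup_le fun n =>
      le_iSup₂_of_le ((n + 1 : ℕ) : R) (Nat.cast_ne_zero.mpr n.succ_ne_zero) le_rfl
  refine (injective_iff_map_eq_zero D).mpr fun x hx => ?_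
  exact Submodule.disjoint_def.mp disjoint_top x (by simpa [mem_eigenspace_iff] using hx) trivial

end EulerDerivation

/-! ### Centralizers of letters -/

section Centralizer

variable {R X : Type*} [CommRing R]

theorem injective_freeLieAlgebra_lift_ι (K X : Type*) [Field K] [CharZero K] :
    Function.Injective (lift K (FreeAlgebra.ι K (X := X))) := by
  let euler : LieDerivation K (FreeLieAlgebra K X) (FreeLieAlgebra K X) := freeLieDerivation (of K)
  have euler_injective : Function.Injective euler :=
    lieDerivation_injective_of_fixes_generators euler (lieSpan_range_freeLieAlgebra_of K X)
      (by simp [euler])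
  let assocRep : FreeAlgebra K X →ₐ[K] Module.End K (FreeLieAlgebra K X × K) :=
    FreeAlgebra.lift K fun z => freeLieAffineRep (of K) (of K z)
  have assocRep_comp_lift :
      assocRep.toLieHom.comp (lift K (FreeAlgebra.ι K)) = freeLieAffineRep (of K) := by
    ext z : 1
    simp [assocRep]
  refine (injective_iff_map_eq_zero _).mpr fun x hx => ?_
  refine (injective_iff_map_eq_zero euler).mp euler_injective x ?_
  rw [freeLieDerivation_apply, ← assocRep_comp_lift]
  simp [hx]

theorem algebraMapInv_freeLieAlgebra_lift_ι (x : FreeLieAlgebra R X) :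
    FreeAlgebra.algebraMapInv (lift R (FreeAlgebra.ι R) x) = 0 := by
  have comp_eq_zero : (AlgHom.toLieHom FreeAlgebra.algebraMapInv).comp (lift R (FreeAlgebra.ι R)) =
      (0 : FreeLieAlgebra R X →ₗ⁅R⁆ R) := by
    ext z
    simp [FreeAlgebra.algebraMapInv]
  exact LieHom.congr_fun comp_eq_zero x

theorem coeff_of_mul_eq_zero_of_commute {R X : Type*} [Semiring R]
    {a : MonoidAlgebra R (FreeMonoid X)} {y z : X}
    (hy : Commute (MonoidAlgebra.single (FreeMonoid.of y) 1) a) (hzy : z ≠ y) (w : FreeMonoid X) :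
    a.coeff (FreeMonoid.of z * w) = 0 :=
  calc a.coeff (FreeMonoid.of z * w)
    _ = (a * MonoidAlgebra.single (FreeMonoid.of y) 1).coeff
          (FreeMonoid.of z * w * FreeMonoid.of y) := by
        rw [MonoidAlgebra.coeff_mul_single_eq_coeff_mul _ fun _ _ => mul_left_inj _, mul_one]
    _ = (MonoidAlgebra.single (FreeMonoid.of y) 1 * a).coeff
          (FreeMonoid.of z * w * FreeMonoid.of y) := by rw [hy.eq]
    _ = 0 := MonoidAlgebra.coeff_single_mul_of_forall_mul_ne _ _ fun _ hd =>
        hzy.symm (List.cons.inj hd).1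

theorem mem_range_algebraMap_of_commute_ι {R X : Type*} [CommSemiring R] {a : FreeAlgebra R X}
    {y z : X} (hyz : y ≠ z)
    (hy : Commute (FreeAlgebra.ι R y) a) (hz : Commute (FreeAlgebra.ι R z) a) :
    a ∈ Set.range (algebraMap R (FreeAlgebra R X)) := by
  let e := FreeAlgebra.equivMonoidAlgebraFreeMonoid (R := R) (X := X)
  have e_ι (x : X) : e (FreeAlgebra.ι R x) = MonoidAlgebra.single (FreeMonoid.of x) 1 := by
    simp [e, FreeAlgebra.equivMonoidAlgebraFreeMonoid]
  have commute_y := e_ι y ▸ hy.map e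
  have commute_z := e_ι z ▸ hz.map e
  refine ⟨(e a).coeff 1, e.injective ?_⟩
  rw [AlgEquiv.commutes]
  ext w
  induction w using FreeMonoid.casesOn with
  | one => simp
  | of_mul x w =>
    have coeff_eq_zero : (e a).coeff (FreeMonoid.of x * w) = 0 := by
      rcases ne_or_eq x y with hxy | rfl
      · exact coeff_of_mul_eq_zero_of_commute commute_y hxy w
      · exact coeff_of_mul_eq_zero_of_commute commute_z hyz w
    simp [coeff_eq_zero]

theorem freeLieAlgebra_eq_zero_of_lie_of_eq_zero {K : Type*} [Field K] [CharZero K] {y z : X}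
    (hyz : y ≠ z) {x : FreeLieAlgebra K X} (hy : ⁅of K y, x⁆ = 0) (hz : ⁅of K z, x⁆ = 0) :
    x = 0 := by
  have commute_lift {w : X} (hw : ⁅of K w, x⁆ = 0) :
      Commute (FreeAlgebra.ι K w) (lift K (FreeAlgebra.ι K) x) := by
    rw [commute_iff_lie_eq, ← lift_of_apply (R := K) (FreeAlgebra.ι K) w, ← LieHom.map_lie, hw,
      map_zero]
  obtain ⟨c, hc⟩ := mem_range_algebraMap_of_commute_ι hyz (commute_lift hy) (commute_lift hz)
  have c_eq_zero : c = 0 := by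
    rw [← FreeAlgebra.algebraMap_leftInverse (X := X) c, hc, algebraMapInv_freeLieAlgebra_lift_ι]
  refine (injective_iff_map_eq_zero _).mp (injective_freeLieAlgebra_lift_ι K X) x ?_
  rw [← hc, c_eq_zero, map_zero]

end Centralizer

/-! ### Extensions by one derivation -/

section DerivationExtension

variable {R L L' : Type*} [CommRing R] [LieRing L] [LieAlgebra R L] [LieRing L'] [LieAlgebra R L']

theorem map_lieDerivation_eq_lie (f : L →ₗ⁅R⁆ L') (D : LieDerivation R L L) (a : L') {s : Set L}
    (hs : LieSubalgebra.lieSpan R L s = ⊤) (hf : ∀ x ∈ s, f (D x) = ⁅a, f x⁆) (x : L) :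
    f (D x) = ⁅a, f x⁆ := by
  have hx : x ∈ LieSubalgebra.lieSpan R L s := by simp [hs]
  induction hx using LieSubalgebra.lieSpan_induction with
  | mem x hx => exact hf x hx
  | zero => simp
  | add x y _ _ hx hy => simp [hx, hy]
  | smul t x _ hx => simp [hx]
  | lie x y _ _ hx hy => simp [D.apply_lie_eq_add, hx, hy, add_comm]

/-- The homomorphism `t ↦ t • D` from the one-dimensional abelian Lie algebra to derivations, so
that `L ⋊⁅derivationLine D⁆ R` is the extension of `L` by an element acting as `D`. -/
def derivationLine (D : LieDerivation R L L) : R →ₗ⁅R⁆ LieDerivation R L L where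
  toLinearMap := LinearMap.toSpanSingleton R _ D
  map_lie' {s t} := by simp [LinearMap.toSpanSingleton_apply, Ring.lie_def, mul_comm]

@[simp]
theorem derivationLine_apply (D : LieDerivation R L L) (t : R) : derivationLine D t = t • D := rfl

/-- The universal property of `L ⋊⁅derivationLine D⁆ R`: a homomorphism out of `L` extends by
`1 ↦ a` as soon as it intertwines `D` with `ad a`. -/
def derivationLineLift {D : LieDerivation R L L} (f : L →ₗ⁅R⁆ L') (a : L')
    (hf : ∀ x, f (D x) = ⁅a, f x⁆) : L ⋊⁅derivationLine D⁆ R →ₗ⁅R⁆ L' where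
  toFun x := f x.left + x.right • a
  map_add' x y := by simp [add_smul, add_add_add_comm]
  map_smul' t x := by simp [mul_smul]
  map_lie' {x y} := by
    have lie_right_eq_zero : ⁅x.right, y.right⁆ = 0 := commute_iff_lie_eq.mp (Commute.all _ _)
    simp only [lie_eq_mk, derivationLine_apply, LieDerivation.smul_apply, lie_right_eq_zero,
      map_sub, map_add, map_smul, LieHom.map_lie, hf, lie_add, add_lie, lie_smul, smul_lie,
      lie_self, zero_smul, smul_zero, add_zero]
    rw [← lie_skew (f x.left) a, smul_neg]
    abel

@[simp]
theorem derivationLineLift_inl {D : LieDerivation R L L} (f : L →ₗ⁅R⁆ L') (a : L')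
    (hf : ∀ x, f (D x) = ⁅a, f x⁆) (x : L) : derivationLineLift f a hf (inl _ x) = f x := by
  simp [derivationLineLift]

@[simp]
theorem derivationLineLift_inr {D : LieDerivation R L L} (f : L →ₗ⁅R⁆ L') (a : L')
    (hf : ∀ x, f (D x) = ⁅a, f x⁆) (t : R) : derivationLineLift f a hf (inr _ t) = t • a := by
  simp [derivationLineLift]

end DerivationExtension

/-- The quotient map by a Lie ideal as a homomorphism of Lie algebras
(`LieSubmodule.Quotient.mk'` is the homomorphism of Lie modules). -/
def lieIdealQuotientMk {R L : Type*} [CommRing R] [LieRing L] [LieAlgebra R L] (I : LieIdeal R L) :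
    L →ₗ⁅R⁆ L ⧸ I where
  toLinearMap := LieSubmodule.Quotient.mk' I
  map_lie' := rfl

theorem lieIdealQuotientMk_eq_zero_iff {R L : Type*} [CommRing R] [LieRing L] [LieAlgebra R L]
    {I : LieIdeal R L} {x : L} : lieIdealQuotientMk I x = 0 ↔ x ∈ I :=
  LieSubmodule.Quotient.mk_eq_zero I

/-! ### Eliminating a letter -/

section Elimination

variable {R X : Type*} [CommRing R] {p q z : X} {r : FreeLieAlgebra R X}

variable (R) in
/-- The substitution `z ↦ (z, 0)`, where the letter `(z, n)` stands for `(ad p)ⁿ z`. -/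
noncomputable def levelZero : FreeLieAlgebra R X →ₗ⁅R⁆ FreeLieAlgebra R (X × ℕ) :=
  lift R fun z => of R (z, 0)

@[simp]
theorem levelZero_of (z : X) : levelZero R (of R z) = of R (z, 0) := by
  simp [levelZero]

open Classical in
/-- The derivation by which `p` acts on the letters `(z, n)` when `⁅p, q⁆ = r`: it sends `(z, n)` to
`(z, n + 1)`, except that `(q, 0)` goes to `r`. -/
noncomputable def shiftDerivation (q : X) (r : FreeLieAlgebra R X) :
    LieDerivation R (FreeLieAlgebra R (X × ℕ)) (FreeLieAlgebra R (X × ℕ)) :=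
  freeLieDerivation (Function.update (fun w => of R (w.1, w.2 + 1)) (q, 0) (levelZero R r))

theorem shiftDerivation_of_self_zero : shiftDerivation q r (of R (q, 0)) = levelZero R r := by
  simp [shiftDerivation]

theorem shiftDerivation_of_of_ne {w : X × ℕ} (hw : w ≠ (q, 0)) :
    shiftDerivation q r (of R w) = of R (w.1, w.2 + 1) := by
  simp [shiftDerivation, hw]

open Classical in
/-- The elimination homomorphism, sending `p` to the element acting as `shiftDerivation q r` and
every other letter `z` to `(z, 0)`. -/
noncomputable def eliminationHom (p q : X) (r : FreeLieAlgebra R X) :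
    FreeLieAlgebra R X →ₗ⁅R⁆ FreeLieAlgebra R (X × ℕ) ⋊⁅derivationLine (shiftDerivation q r)⁆ R :=
  lift R (Function.update (fun z => inl _ (of R (z, 0))) p (inr _ 1))

theorem eliminationHom_of_self : eliminationHom p q r (of R p) = inr _ 1 := by
  simp [eliminationHom]

theorem eliminationHom_of_of_ne (hz : z ≠ p) :
    eliminationHom p q r (of R z) = inl _ (of R (z, 0)) := by
  simp [eliminationHom, hz]

theorem eliminationHom_eq_inl_levelZero {u : FreeLieAlgebra R X}
    (hu : u ∈ LieSubalgebra.lieSpan R _ (of R '' {p}ᶜ)) :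
    eliminationHom p q r u = inl _ (levelZero R u) := by
  induction hu using LieSubalgebra.lieSpan_induction with
  | mem u hu =>
    obtain ⟨z, hz, rfl⟩ := hu
    rw [eliminationHom_of_of_ne hz, levelZero_of]
  | zero => simp
  | add u v _ _ hu hv => simp only [map_add, hu, hv]
  | smul t u _ hu => simp only [map_smul, hu]
  | lie u v _ _ hu hv => simp only [LieHom.map_lie, hu, hv]

theorem eliminationHom_lie_of_of (hpq : p ≠ q)
    (hr : r ∈ LieSubalgebra.lieSpan R _ (of R '' {p}ᶜ)) :
    eliminationHom p q r ⁅of R p, of R q⁆ = eliminationHom p q r r := by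
  rw [LieHom.map_lie, eliminationHom_of_self, eliminationHom_of_of_ne hpq.symm,
    eliminationHom_eq_inl_levelZero hr]
  simp [shiftDerivation_of_self_zero]

section Retraction

variable {L : Type*} [LieRing L] [LieAlgebra R L]

/-- The homomorphism evaluating the letter `(z, n)` as `(ad (f p))ⁿ (f z)`. -/
noncomputable def iteratedAdHom (f : FreeLieAlgebra R X →ₗ⁅R⁆ L) (p : X) :
    FreeLieAlgebra R (X × ℕ) →ₗ⁅R⁆ L :=
  lift R fun w => ((LieAlgebra.ad R L (f (of R p))) ^ w.2) (f (of R w.1))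

@[simp]
theorem iteratedAdHom_of (f : FreeLieAlgebra R X →ₗ⁅R⁆ L) (w : X × ℕ) :
    iteratedAdHom f p (of R w) = ((LieAlgebra.ad R L (f (of R p))) ^ w.2) (f (of R w.1)) := by
  simp [iteratedAdHom]

theorem iteratedAdHom_levelZero (f : FreeLieAlgebra R X →ₗ⁅R⁆ L) (u : FreeLieAlgebra R X) :
    iteratedAdHom f p (levelZero R u) = f u := by
  have comp_levelZero : (iteratedAdHom f p).comp (levelZero R) = f := by
    ext z
    simp
  exact LieHom.congr_fun comp_levelZero u

theorem iteratedAdHom_shiftDerivation {f : FreeLieAlgebra R X →ₗ⁅R⁆ L}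
    (hf : f ⁅of R p, of R q⁆ = f r) (k : FreeLieAlgebra R (X × ℕ)) :
    iteratedAdHom f p (shiftDerivation q r k) = ⁅f (of R p), iteratedAdHom f p k⁆ := by
  refine map_lieDerivation_eq_lie _ _ _ (lieSpan_range_freeLieAlgebra_of R _) ?_ k
  rintro - ⟨w, rfl⟩
  by_cases hw : w = (q, 0)
  · subst hw
    rw [shiftDerivation_of_self_zero, iteratedAdHom_levelZero, ← hf]
    simp
  · rw [shiftDerivation_of_of_ne hw]
    simp [pow_succ']

theorem ker_eliminationHom_le {f : FreeLieAlgebra R X →ₗ⁅R⁆ L} (hf : f ⁅of R p, of R q⁆ = f r) :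
    (eliminationHom p q r).ker ≤ f.ker := by
  let retraction : FreeLieAlgebra R (X × ℕ) ⋊⁅derivationLine (shiftDerivation q r)⁆ R →ₗ⁅R⁆ L :=
    derivationLineLift (iteratedAdHom f p) (f (of R p)) (iteratedAdHom_shiftDerivation hf)
  have retraction_comp : retraction.comp (eliminationHom p q r) = f := by
    ext z
    rcases eq_or_ne z p with rfl | hz
    · rw [LieHom.comp_apply, eliminationHom_of_self, derivationLineLift_inr, one_smul]
    · rw [LieHom.comp_apply, eliminationHom_of_of_ne hz, derivationLineLift_inl]
      simp
  intro u hu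
  rw [LieHom.mem_ker] at hu ⊢
  rw [← retraction_comp, LieHom.comp_apply, hu, map_zero]

end Retraction

theorem ker_eliminationHom (hpq : p ≠ q)
    (hr : r ∈ LieSubalgebra.lieSpan R _ (of R '' {p}ᶜ)) :
    (eliminationHom p q r).ker = LieSubmodule.lieSpan R _ {⁅of R p, of R q⁆ - r} := by
  refine le_antisymm ?_ (LieSubmodule.lieSpan_le.mpr ?_)
  · set I : LieIdeal R (FreeLieAlgebra R X) := LieSubmodule.lieSpan R _ {⁅of R p, of R q⁆ - r}
    have mk_lie_eq : lieIdealQuotientMk I ⁅of R p, of R q⁆ = lieIdealQuotientMk I r := by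
      rw [← sub_eq_zero, ← map_sub, lieIdealQuotientMk_eq_zero_iff]
      exact LieSubmodule.subset_lieSpan rfl
    exact fun u hu => lieIdealQuotientMk_eq_zero_iff.mp (ker_eliminationHom_le mk_lie_eq hu)
  · simp [eliminationHom_lie_of_of hpq hr]

end Elimination

/-! ### The center -/

section Center

variable {K X : Type*} [Field K] [CharZero K] {p q z : X}

theorem eq_zero_of_lie_inr_one_of_lie_inl {r : FreeLieAlgebra K X} (hzq : z ≠ q)
    {x : FreeLieAlgebra K (X × ℕ) ⋊⁅derivationLine (shiftDerivation q r)⁆ K}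
    (lie_inr : ⁅inr (derivationLine (shiftDerivation q r)) 1, x⁆ = 0)
    (lie_inl : ⁅inl (derivationLine (shiftDerivation q r)) (of K (z, 0)), x⁆ = 0) : x = 0 := by
  obtain ⟨k, t⟩ := x
  set D := shiftDerivation q r
  have D_of (n : ℕ) : D (of K (z, n)) = of K (z, n + 1) := shiftDerivation_of_of_ne (by simp [hzq])
  have D_k : D k = 0 := by simpa using congrArg left lie_inr
  have lie_k : ⁅of K (z, 0), k⁆ = t • of K (z, 1) := by
    simpa [D_of, sub_eq_zero] using congrArg left lie_inl
  have t_eq_zero : t = 0 := by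
    classical
    let coeff : FreeLieAlgebra K (X × ℕ) →ₗ⁅K⁆ K := lift K (Pi.single (z, 1) 1)
    simpa [coeff, Ring.lie_def, mul_comm, eq_comm] using congrArg coeff lie_k
  subst t_eq_zero
  have lie_zero : ⁅of K (z, 0), k⁆ = 0 := by rw [lie_k, zero_smul]
  have lie_one : ⁅of K (z, 1), k⁆ = 0 := by
    simpa [D.apply_lie_eq_add, D_k, D_of] using congrArg D lie_zero
  have k_eq_zero : k = 0 := freeLieAlgebra_eq_zero_of_lie_of_eq_zero (by simp) lie_zero lie_one
  simp [k_eq_zero]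

theorem center_symp_lie_algebra_trivial_general (hpq : p ≠ q) (hzp : z ≠ p) (hzq : z ≠ q)
    {ω : FreeLieAlgebra K X}
    (hω : ω - ⁅of K p, of K q⁆ ∈ LieSubalgebra.lieSpan K _ (of K '' {p}ᶜ)) :
    LieAlgebra.center K (FreeLieAlgebra K X ⧸
      (LieSubmodule.lieSpan K _ {ω} : LieIdeal K (FreeLieAlgebra K X))) = ⊥ := by
  obtain ⟨r, hr, rfl⟩ : ∃ r ∈ LieSubalgebra.lieSpan K _ (of K '' {p}ᶜ), ω = ⁅of K p, of K q⁆ - r :=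
    ⟨⁅of K p, of K q⁆ - ω, by simpa using neg_mem hω, by simp⟩
  rw [← ker_eliminationHom hpq hr, LieSubmodule.eq_bot_iff]
  intro x hx
  obtain ⟨u, rfl⟩ := LieSubmodule.Quotient.surjective_mk' _ x
  have lie_eliminationHom (v : FreeLieAlgebra K X) :
      ⁅eliminationHom p q r v, eliminationHom p q r u⁆ = 0 := by
    rw [← LieHom.map_lie, ← LieHom.mem_ker, ← LieSubmodule.Quotient.mk_eq_zero]
    exact (LieModule.mem_maxTrivSubmodule _ _ _ _).mp hx (LieSubmodule.Quotient.mk v)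
  rw [LieSubmodule.Quotient.mk_eq_zero, LieHom.mem_ker]
  exact eq_zero_of_lie_inr_one_of_lie_inl hzq
    (by rw [← eliminationHom_of_self, lie_eliminationHom])
    (by rw [← eliminationHom_of_of_ne hzp, lie_eliminationHom])

end Center

theorem sympRelation_sub_lie_mem_lieSpan {g : ℕ} (i : Fin g) :
    sympRelation g - ⁅of ℚ (⟨i, by omega⟩ : Fin (2 * g)), of ℚ ⟨g + i, by omega⟩⁆ ∈
      LieSubalgebra.lieSpan ℚ (FreeLieAlgebra ℚ (Fin (2 * g))) (of ℚ '' {⟨i, by omega⟩}ᶜ) := by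
  rw [sympRelation, ← Finset.add_sum_erase _ _ (Finset.mem_univ i), add_sub_cancel_left]
  refine sum_mem fun j hj => LieSubalgebra.lie_mem _ ?_ ?_ <;>
    refine LieSubalgebra.subset_lieSpan (Set.mem_image_of_mem _ ?_)
  · simpa [Fin.ext_iff] using Finset.ne_of_mem_erase hj
  · simp only [Set.mem_compl_iff, Set.mem_singleton_iff, Fin.ext_iff]
    omega

/-- For `g ≥ 2`, the center of `L_g` is trivial: the only `x ∈ L_g` with `⁅y, x⁆ = 0` for
all `y ∈ L_g` is `x = 0`. -/
theorem center_symp_lie_algebra_trivial (g : ℕ) (hg : 2 ≤ g) (x : SympLieAlgebra g)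
    (hx : ∀ y : SympLieAlgebra g, ⁅y, x⁆ = 0) : x = 0 := by
  let p : Fin (2 * g) := ⟨0, by omega⟩
  let q : Fin (2 * g) := ⟨g, by omega⟩
  let z : Fin (2 * g) := ⟨1, by omega⟩
  have center_eq_bot : LieAlgebra.center ℚ (SympLieAlgebra g) = ⊥ :=
    center_symp_lie_algebra_trivial_general (p := p) (q := q) (z := z)
      (Fin.ne_of_val_ne (by grind)) (Fin.ne_of_val_ne (by grind)) (Fin.ne_of_val_ne (by grind))
      (sympRelation_sub_lie_mem_lieSpan (⟨0, by omega⟩ : Fin g))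
  exact (LieSubmodule.eq_bot_iff _).mp center_eq_bot x
    ((LieModule.mem_maxTrivSubmodule _ _ _ _).mpr hx)
end
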